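/- Let G be a 3-connected cubic graph on n vertices with a distinguished root vertex r ∈ V(G). If every peripheral cycle of G has length at most q, then the graph G − r has at least 2^{n/(2q)} decompositions of its edge set into (the edge set of) a spanning tree and a 2-base. -/

import Mathlib

open scoped Classical

/-- A multigraph with an orientation: each edge `e` has a source `src e` and a target `tgt e`.
Loops and parallel edges are allowed. -/
structure Multigraph (V E : Type) where
  src : E → V
  tgt : E → V

namespace Multigraph

variable {V E : Type}

/-- `u` and `v` are joined by some edge satisfying the predicate `P`. -/
def adjVia (G : Multigraph V E) (P : E → Prop) (u v : V) : Prop :=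
  ∃ e, P e ∧ ((G.src e = u ∧ G.tgt e = v) ∨ (G.src e = v ∧ G.tgt e = u))

/-- `v` is reachable from `u` using only edges satisfying `P`. -/
def Reaches (G : Multigraph V E) (P : E → Prop) : V → V → Prop :=
  Relation.ReflTransGen (G.adjVia P)

/-- The graph is connected when only edges satisfying `P` are kept (all edges deleted
whose predicate fails, all vertices kept). -/
def ConnectedVia (G : Multigraph V E) (P : E → Prop) : Prop :=
  Nonempty V ∧ ∀ u v : V, G.Reaches P u v

def Connected (G : Multigraph V E) : Prop :=
  G.ConnectedVia fun _ => True

/-- `G` is `k`-edge-connected: it is connected and has no edge cut of size less than `k`;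
equivalently, deleting any set of fewer than `k` edges leaves it connected. -/
def EdgeConnected (G : Multigraph V E) (k : ℕ) : Prop :=
  ∀ S : Set E, S.ncard < k → G.ConnectedVia fun e => e ∉ S

/-- The degree of a vertex (loops counted twice). -/
noncomputable def degree (G : Multigraph V E) (v : V) : ℕ :=
  {e | G.src e = v}.ncard + {e | G.tgt e = v}.ncard

/-- Every vertex has degree exactly 3. -/
def Cubic (G : Multigraph V E) : Prop :=
  ∀ v : V, G.degree v = 3

/-- `φ : E → Γ` is a flow: at every vertex, the sum over outgoing edges equals the
sum over incoming edges. -/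
def IsFlow [Fintype E] {Γ : Type} [AddCommGroup Γ] (G : Multigraph V E) (φ : E → Γ) : Prop :=
  ∀ v : V, (∑ e : E, if G.src e = v then φ e else 0) = ∑ e : E, if G.tgt e = v then φ e else 0

/-- The vertex `v` is an endpoint of some edge of `C`. -/
def touches (G : Multigraph V E) (C : Set E) (v : V) : Prop :=
  ∃ e ∈ C, G.src e = v ∨ G.tgt e = v

/-- An edge set `C` is (the edge set of) a cycle: it is nonempty, every vertex it touches
has degree exactly 2 in it, and it is connected. -/
def IsCycle (G : Multigraph V E) (C : Set E) : Prop :=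
  C.Nonempty ∧
  (∀ v : V, G.touches C v →
    ({e ∈ C | G.src e = v}.ncard + {e ∈ C | G.tgt e = v}.ncard = 2)) ∧
  (∀ u v : V, G.touches C u → G.touches C v → G.Reaches (· ∈ C) u v)

/-- `R` is `k`-closed: every cycle with at least one edge outside `R` has at least
`k+1` edges outside `R`. -/
def Closed (G : Multigraph V E) (k : ℕ) (R : Set E) : Prop :=
  ∀ C : Set E, G.IsCycle C → (C \ R).Nonempty → k + 1 ≤ (C \ R).ncard

/-- The `k`-closure `⟨S⟩ₖ` of `S` : the minimal `k`-closed set containing `S`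
(the family of `k`-closed sets is closed under intersections). -/
def kClosure (G : Multigraph V E) (k : ℕ) (S : Set E) : Set E :=
  ⋂₀ {R : Set E | S ⊆ R ∧ G.Closed k R}

/-- `S` is a `k`-base: its `k`-closure is the whole edge set. -/
def IsBase (G : Multigraph V E) (k : ℕ) (S : Set E) : Prop :=
  G.kClosure k S = Set.univ

/-- An edge set `S` is peripheral if `G − S` is connected. -/
def Peripheral (G : Multigraph V E) (S : Set E) : Prop :=
  G.ConnectedVia fun e => e ∉ S

/-- The spanning subgraph `(V, F)` is a forest, i.e. contains no cycle. -/
def IsForest (G : Multigraph V E) (F : Set E) : Prop :=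
  ∀ C : Set E, G.IsCycle C → ¬ C ⊆ F

/-- `vs`, `es` describe a path: distinct vertices `vs 0, …, vs n` and distinct edges
`es 0, …, es (n-1)` where `es i` joins `vs i` and `vs (i+1)`. -/
def IsPath (G : Multigraph V E) {n : ℕ} (vs : Fin (n + 1) → V) (es : Fin n → E) : Prop :=
  Function.Injective vs ∧ Function.Injective es ∧
  ∀ i : Fin n,
    (G.src (es i) = vs i.castSucc ∧ G.tgt (es i) = vs i.succ) ∨
    (G.src (es i) = vs i.succ ∧ G.tgt (es i) = vs i.castSucc)

/-- The edge `e` has `y` as one endpoint and its other endpoint in `X`,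
i.e. `e ∈ E(y, X)`. -/
def joins (G : Multigraph V E) (e : E) (y : V) (X : Set V) : Prop :=
  (G.src e = y ∧ G.tgt e ∈ X) ∨ (G.tgt e = y ∧ G.src e ∈ X)

/-- `W` is the vertex set of a connected component of `G − X`. -/
def IsComponent (G : Multigraph V E) (X W : Set V) : Prop :=
  W.Nonempty ∧ Disjoint W X ∧
  (∀ u ∈ W, ∀ v : V, v ∉ X → G.adjVia (fun _ => True) u v → v ∈ W) ∧
  (∀ u ∈ W, ∀ v ∈ W, G.Reaches (fun e => G.src e ∉ X ∧ G.tgt e ∉ X) u v)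

/-- The subgraph induced on `W`, with only those of its edges satisfying `P` kept,
is connected. -/
def ConnectedOn (G : Multigraph V E) (W : Set V) (P : E → Prop) : Prop :=
  ∀ u ∈ W, ∀ v ∈ W, G.Reaches (fun e => P e ∧ G.src e ∈ W ∧ G.tgt e ∈ W) u v

/-- The subgraph induced on `W` is `k`-edge-connected. -/
def EdgeConnectedOn (G : Multigraph V E) (W : Set V) (k : ℕ) : Prop :=
  ∀ S : Set E, S.ncard < k → G.ConnectedOn W fun e => e ∉ S

/-- Some cycle lies entirely inside the vertex set `X`. -/
def HasCycleIn (G : Multigraph V E) (X : Set V) : Prop :=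
  ∃ C : Set E, G.IsCycle C ∧ ∀ e ∈ C, G.src e ∈ X ∧ G.tgt e ∈ X

/-- The edge cut `E(X, V \ X)`. -/
def cutEdges (G : Multigraph V E) (X : Set V) : Set E :=
  {e | (G.src e ∈ X ∧ G.tgt e ∉ X) ∨ (G.src e ∉ X ∧ G.tgt e ∈ X)}

/-- A cubic graph is cyclically `k`-edge-connected if every edge cut separating two
cycle-containing parts has at least `k` edges. -/
def CyclicallyEdgeConnected (G : Multigraph V E) (k : ℕ) : Prop :=
  ∀ X : Set V, G.HasCycleIn X → G.HasCycleIn Xᶜ → k ≤ (G.cutEdges X).ncard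

/-- `G` is 3-connected: more than 3 vertices, connected, and still connected after
deleting any two vertices. -/
def ThreeConnected [Fintype V] (G : Multigraph V E) : Prop :=
  3 < Fintype.card V ∧ G.Connected ∧
    ∀ u v : V, G.ConnectedOn {w : V | w ≠ u ∧ w ≠ v} fun _ => True

/-- The graph `G − r` obtained by deleting the vertex `r` and all incident edges. -/
def deleteVertex (G : Multigraph V E) (r : V) :
    Multigraph {v : V // v ≠ r} {e : E // G.src e ≠ r ∧ G.tgt e ≠ r} where
  src e := ⟨G.src e.1, e.2.1⟩
  tgt e := ⟨G.tgt e.1, e.2.2⟩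

end Multigraph

/-!
Split the vertices into a connected untreated part `H` and its complement, which contains `r` and a
connected treated part `Y`, so that all boundary edges of `H` except one edge `e` lead to `Y`; at
the start, `H = V \ {r}` and `Y` is empty. A partial base of `H` is the complement of a spanning
tree of `G[H]` that, given the edges of `G[Y]`, generates every edge of `G[H ∪ Y]` except possibly
`e`. At the start, these are exactly the wanted `2`-bases.

If `G[H]` has a bridge, a partial base of each of its two sides together form one of `H`, so the
numbers of partial bases multiply. Otherwise, consider a strip, that is, a minimal connected set
`Q ⊆ H` that joins two boundary edges of `H`, leaves `H \ Q` connected and has exactly one edge from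
each of its vertices to `H \ Q`. If `B` is a partial base of `H \ Q`, then `B ∪ E(G[Q])` is one of
`H`. Outside `H` the strip closes up to a peripheral cycle, so it contributes at most `q - 1` edges.

Unless `H` is a single vertex, a bridgeless `H` has two different intersecting strips `Q` and `Q'`.
One of them, say `Q'`, is not contained in the other, so some edge of `G[Q']` leaves `Q`. This edge
lies in the spanning tree complementary to any `B ∪ E(G[Q])`, but in every partial base obtained
from `Q'`; so the two families are disjoint, and every `q - 1` edges of the base double the count.
The `2`-bases of `G - r` have `n / 2 - 1` edges, and `n / 2 - 1 ≤ k (q - 1)` with `k ≥ 1` gives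
`k ≥ n / (2 q)`.
-/

namespace Multigraph

/-! ### Edges and vertex sets -/

section

variable {V E : Type} {G : Multigraph V E} {P P' : Set E} {A B C K S Z : Set V} {u v : V} {e : E}

/-- The edges with both endpoints in `S`. -/
def inside (G : Multigraph V E) (S : Set V) : Set E :=
  {e | G.src e ∈ S ∧ G.tgt e ∈ S}

/-- The edges with one endpoint in `A` and the other one in `B`. -/
def between (G : Multigraph V E) (A B : Set V) : Set E :=
  {e | (G.src e ∈ A ∧ G.tgt e ∈ B) ∨ (G.src e ∈ B ∧ G.tgt e ∈ A)}

/-- The edges incident to `v`, a loop being counted once. -/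
def incidentEdges (G : Multigraph V E) (v : V) : Set E :=
  {e | G.src e = v ∨ G.tgt e = v}

/-- Some endpoint of `e` lies in `S`. -/
def Meets (G : Multigraph V E) (e : E) (S : Set V) : Prop :=
  G.src e ∈ S ∨ G.tgt e ∈ S

/-- The vertices joined by an edge to a vertex of `S`; they may lie in `S` themselves. -/
def neighbors (G : Multigraph V E) (S : Set V) : Set V :=
  {v | (G.between {v} S).Nonempty}

@[grind =]
theorem mem_inside : e ∈ G.inside S ↔ G.src e ∈ S ∧ G.tgt e ∈ S := Iff.rfl

@[grind =]
theorem mem_between : e ∈ G.between A B ↔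
    (G.src e ∈ A ∧ G.tgt e ∈ B) ∨ (G.src e ∈ B ∧ G.tgt e ∈ A) := Iff.rfl

@[grind =]
theorem mem_incidentEdges : e ∈ G.incidentEdges v ↔ G.src e = v ∨ G.tgt e = v := Iff.rfl

@[grind =]
theorem mem_cutEdges : e ∈ G.cutEdges S ↔
    (G.src e ∈ S ∧ G.tgt e ∉ S) ∨ (G.src e ∉ S ∧ G.tgt e ∈ S) := Iff.rfl

@[grind =]
theorem meets_iff : G.Meets e S ↔ G.src e ∈ S ∨ G.tgt e ∈ S := Iff.rfl

theorem exists_mem_between_singleton (he : e ∈ G.between A B) :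
    ∃ b ∈ B, e ∈ G.between A {b} := by
  rcases he with ⟨hsrc, htgt⟩ | ⟨hsrc, htgt⟩
  exacts [⟨_, htgt, Or.inl ⟨hsrc, rfl⟩⟩, ⟨_, hsrc, Or.inr ⟨rfl, htgt⟩⟩]

theorem Meets.exists_mem_incidentEdges (h : G.Meets e S) : ∃ v ∈ S, e ∈ G.incidentEdges v :=
  h.elim (fun h => ⟨_, h, Or.inl rfl⟩) fun h => ⟨_, h, Or.inr rfl⟩

theorem Meets.mono (h : G.Meets e A) (hAB : A ⊆ B) : G.Meets e B :=
  h.imp (@hAB _) (@hAB _)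

theorem Meets.not_meets_of_disjoint (h : G.Meets e A) (he : e ∈ G.cutEdges S) (hA : A ⊆ S)
    (hB : B ⊆ S) (hAB : Disjoint A B) : ¬ G.Meets e B := by
  grind

theorem mem_between_sdiff_or_mem_cutEdges (hAB : A ⊆ B) (he : e ∈ G.cutEdges A) :
    e ∈ G.between A (B \ A) ∨ e ∈ G.cutEdges B ∧ G.Meets e A := by
  grind

theorem cutEdges_compl (S : Set V) : G.cutEdges Sᶜ = G.cutEdges S := by
  grind

theorem between_comm (A B : Set V) : G.between A B = G.between B A := by
  grind

/-! ### Connected vertex sets -/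

/-- The graph with vertex set `S` and those edges of `P` that lie inside `S` is connected (or `S` is
empty), expressed by cuts: `S` has no partition into two nonempty parts without an edge of `P`
between them. -/
def LinkedBy (G : Multigraph V E) (P : Set E) (S : Set V) : Prop :=
  ∀ A ⊆ S, A.Nonempty → (S \ A).Nonempty → ∃ e ∈ P, e ∈ G.between A (S \ A)

/-- The subgraph induced on `S` is connected (or empty). -/
abbrev Linked (G : Multigraph V E) (S : Set V) : Prop := G.LinkedBy Set.univ S

theorem LinkedBy.mono (h : G.LinkedBy P S) (hP : P ⊆ P') : G.LinkedBy P' S := by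
  grind [LinkedBy]

theorem LinkedBy.inter_inside (h : G.LinkedBy P S) : G.LinkedBy (P ∩ G.inside S) S := by
  intro A hA h1 h2
  obtain ⟨e, he, hb⟩ := h A hA h1 h2
  exact ⟨e, by grind, hb⟩

theorem Linked.nonempty_between (h : G.Linked S) (hA : A ⊆ S) (hne : A.Nonempty)
    (hne' : (S \ A).Nonempty) : (G.between A (S \ A)).Nonempty :=
  let ⟨e, _, he⟩ := h A hA hne hne'
  ⟨e, he⟩

theorem linkedBy_empty (P : Set E) : G.LinkedBy P ∅ := by
  rintro A - - ⟨_, h, -⟩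
  exact h.elim

theorem linkedBy_singleton (P : Set E) (v : V) : G.LinkedBy P {v} := by
  rintro A hA ⟨a, ha⟩ ⟨b, hb⟩
  grind

theorem LinkedBy.of_linkedBy_subset (hK : G.LinkedBy P K) (hKS : K ⊆ S)
    (h : ∀ A ⊆ S \ K, A.Nonempty → ∃ e ∈ P, e ∈ G.between A (S \ A)) : G.LinkedBy P S := by
  intro A hA hne hne'
  by_cases hAK : (A ∩ K).Nonempty
  · by_cases hAK' : (K \ A).Nonempty
    · obtain ⟨e, he, hb⟩ := hK (A ∩ K) Set.inter_subset_right hAK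
        (by rwa [Set.sdiff_inter_self_eq_sdiff])
      exact ⟨e, he, by grind⟩
    · obtain ⟨e, he, hb⟩ := h (S \ A) (by grind [Set.not_nonempty_iff_eq_empty]) hne'
      exact ⟨e, he, by grind⟩
  · exact h A (by grind [Set.not_nonempty_iff_eq_empty]) hne

theorem LinkedBy.union (hA : G.LinkedBy P A) (hB : G.LinkedBy P B) (he : e ∈ P)
    (hb : e ∈ G.between A B) : G.LinkedBy P (A ∪ B) := by
  refine hA.of_linkedBy_subset Set.subset_union_left fun C hC hne => ?_
  by_cases hCB : (B \ C).Nonempty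
  · obtain ⟨f, hf, hfb⟩ := hB C (by grind) hne hCB
    exact ⟨f, hf, by grind⟩
  · have : B ⊆ C := by rwa [Set.not_nonempty_iff_eq_empty, Set.sdiff_eq_empty] at hCB
    exact ⟨e, he, by grind⟩

theorem LinkedBy.insert_of_mem_between (hA : G.LinkedBy P A) (he : e ∈ P)
    (hb : e ∈ G.between {v} A) : G.LinkedBy P (insert v A) := by
  rw [Set.insert_eq]
  exact (linkedBy_singleton P v).union hA he hb

theorem LinkedBy.reaches (h : G.LinkedBy P S) (hu : u ∈ S) (hv : v ∈ S) :
    G.Reaches (· ∈ P) u v := by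
  by_contra hcon
  obtain ⟨e, he, hb⟩ := h {x | x ∈ S ∧ G.Reaches (· ∈ P) u x} (fun x hx => hx.1)
    ⟨u, hu, Relation.ReflTransGen.refl⟩ ⟨v, hv, fun h => hcon h.2⟩
  rcases hb with ⟨⟨-, hsrc⟩, htgtS, htgt⟩ | ⟨⟨hsrcS, hsrc⟩, -, htgt⟩
  · exact htgt ⟨htgtS, hsrc.tail ⟨e, he, Or.inl ⟨rfl, rfl⟩⟩⟩
  · exact hsrc ⟨hsrcS, htgt.tail ⟨e, he, Or.inr ⟨rfl, rfl⟩⟩⟩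

theorem Reaches.mem_of_forall_notMem_cutEdges {Q : E → Prop} (h : G.Reaches Q u v)
    (hA : ∀ e, Q e → e ∉ G.cutEdges A) (hu : u ∈ A) : v ∈ A := by
  induction h with
  | refl => exact hu
  | tail _ hbc ih =>
    obtain ⟨e, he, h⟩ := hbc
    grind

theorem linkedBy_of_reaches {Q : E → Prop}
    (h : ∀ u ∈ S, ∀ v ∈ S, G.Reaches (fun e => Q e ∧ G.src e ∈ S ∧ G.tgt e ∈ S) u v) :
    G.LinkedBy {e | Q e} S := by
  rintro A hA ⟨a, ha⟩ ⟨b, hb, hbA⟩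
  by_contra! hcon
  refine hbA ((h a (hA ha) b hb).mem_of_forall_notMem_cutEdges (fun e he hcut => ?_) ha)
  have := hcon e he.1
  grind

/-- `C` is a connected component of the subgraph induced on `S` with edge set `P`, or is empty. -/
structure IsComponentIn (G : Multigraph V E) (P : Set E) (S C : Set V) : Prop where
  subset : C ⊆ S
  linkedBy : G.LinkedBy P C
  notMem_between : ∀ e ∈ P, e ∉ G.between C (S \ C)

theorem LinkedBy.exists_isComponentIn [Finite V] (hA : G.LinkedBy P A) (hAS : A ⊆ S) :
    ∃ C, A ⊆ C ∧ G.IsComponentIn P S C := by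
  obtain ⟨C, hAC, ⟨hCS, hC⟩, hmax⟩ :=
    (Set.toFinite {C : Set V | C ⊆ S ∧ G.LinkedBy P C}).exists_le_maximal
      (show A ∈ _ from ⟨hAS, hA⟩)
  have hstep : ∀ v ∈ S \ C, ∀ e ∈ P, e ∉ G.between {v} C := fun v hv e heP hb =>
    hv.2 (hmax (y := insert v C) ⟨Set.insert_subset hv.1 hCS, hC.insert_of_mem_between heP hb⟩
      (Set.subset_insert _ _) (Set.mem_insert _ _))
  refine ⟨C, hAC, hCS, hC, fun e heP he => ?_⟩
  rcases he with ⟨hsrc, htgt⟩ | ⟨hsrc, htgt⟩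
  · exact hstep _ htgt e heP (Or.inr ⟨hsrc, rfl⟩)
  · exact hstep _ hsrc e heP (Or.inl ⟨rfl, htgt⟩)

theorem IsComponentIn.subset_of_inter_nonempty (hC : G.IsComponentIn P S C) (hZ : G.LinkedBy P Z)
    (hZS : Z ⊆ S) (hne : (Z ∩ C).Nonempty) : Z ⊆ C := by
  by_contra hcon
  obtain ⟨z, hz, hzC⟩ := Set.not_subset.1 hcon
  obtain ⟨e, he, hb⟩ := hZ (Z ∩ C) Set.inter_subset_left hne ⟨z, hz, fun h => hzC h.2⟩
  have := hC.notMem_between e he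
  grind

theorem IsComponentIn.linkedBy_sdiff (hC : G.IsComponentIn P (S \ K) C) (hS : G.LinkedBy P S)
    (hK : G.LinkedBy P K) (hKS : K ⊆ S) (hne : K.Nonempty) : G.LinkedBy P (S \ C) := by
  have hCS := hC.subset
  refine hK.of_linkedBy_subset (by grind) fun A hA hAne => ?_
  obtain ⟨k, hk⟩ := hne
  obtain ⟨e, he, hb⟩ := hS A (by grind) hAne ⟨k, by grind⟩
  have := hC.notMem_between e he
  exact ⟨e, he, by grind⟩

theorem Linked.sdiff_singleton (hS : G.Linked S) (h : (G.between {v} (S \ {v})).Subsingleton) :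
    G.Linked (S \ {v}) := by
  by_cases hv : v ∈ S
  swap
  · rwa [Set.sdiff_singleton_eq_self hv]
  intro A hA hne hne'
  obtain ⟨e, he⟩ := hS.nonempty_between (A := A) (by grind) hne ⟨v, by grind⟩
  obtain ⟨f, hf⟩ := hS.nonempty_between (A := (S \ {v}) \ A) (by grind) hne' ⟨v, by grind⟩
  by_cases hev : e ∈ G.between {v} (S \ {v})
  · have hfv : f ∉ G.between {v} (S \ {v}) := fun hfv => by
      have := h hev hfv
      grind
    exact ⟨f, trivial, by grind⟩
  · exact ⟨e, trivial, by grind⟩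

/-! ### Cubic graphs -/

/-- No edge joins a vertex to itself. -/
def Loopless (G : Multigraph V E) : Prop := ∀ e, G.src e ≠ G.tgt e

/-- The loopless cubic graphs without edge cuts of size at most two: what remains of 3-connectedness
in the argument. -/
structure IsCubicThreeEdgeConnected (G : Multigraph V E) : Prop where
  cubic : G.Cubic
  loopless : G.Loopless
  edgeConnected : G.EdgeConnected 3

theorem Cubic.ncard_incidentEdges [Finite E] (hG : G.Cubic) (hl : G.Loopless) (v : V) :
    (G.incidentEdges v).ncard = 3 := by
  rw [← hG v, degree, ← Set.ncard_union_eq]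
  · rfl
  · rw [Set.disjoint_left]
    rintro e rfl h
    exact hl e h.symm

theorem Cubic.incidentEdges_eq_of_mem [Finite E] {a b c : E} (hG : G.Cubic) (hl : G.Loopless)
    (ha : a ∈ G.incidentEdges v) (hb : b ∈ G.incidentEdges v) (hc : c ∈ G.incidentEdges v)
    (hab : a ≠ b) (hac : a ≠ c) (hbc : b ≠ c) : G.incidentEdges v = {a, b, c} := by
  refine (Set.eq_of_subset_of_ncard_le (by grind) ?_).symm
  rw [hG.ncard_incidentEdges hl, Set.ncard_eq_three.2 ⟨a, b, c, hab, hac, hbc, rfl⟩]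

theorem Cubic.exists_incidentEdges_eq [Finite E] {a b : E} (hG : G.Cubic) (hl : G.Loopless)
    (ha : a ∈ G.incidentEdges v) (hb : b ∈ G.incidentEdges v) (hab : a ≠ b) :
    ∃ c, c ≠ a ∧ c ≠ b ∧ G.incidentEdges v = {a, b, c} := by
  obtain ⟨c, hc, hcab⟩ := Set.exists_mem_notMem_of_ncard_lt_ncard
    (s := {a, b}) (t := G.incidentEdges v)
    (by rw [hG.ncard_incidentEdges hl, Set.ncard_pair hab]; exact Nat.lt_succ_self 2)
  exact ⟨c, by grind, by grind,
    hG.incidentEdges_eq_of_mem hl ha hb hc hab (by grind) (by grind)⟩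

theorem EdgeConnected.le_ncard_cutEdges {k : ℕ} (h : G.EdgeConnected k) (hS : S.Nonempty)
    (hS' : Sᶜ.Nonempty) : k ≤ (G.cutEdges S).ncard := by
  by_contra! hlt
  obtain ⟨u, hu⟩ := hS
  obtain ⟨v, hv⟩ := hS'
  exact hv (((h _ hlt).2 u v).mem_of_forall_notMem_cutEdges (fun _ he => he) hu)

theorem edgeConnected_of_forall_le_ncard_cutEdges [Finite E] [Nonempty V] {k : ℕ}
    (h : ∀ S : Set V, S.Nonempty → Sᶜ.Nonempty → k ≤ (G.cutEdges S).ncard) :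
    G.EdgeConnected k := by
  refine fun F hF => ⟨inferInstance, fun u v => ?_⟩
  suffices hlink : G.LinkedBy Fᶜ Set.univ from hlink.reaches (Set.mem_univ u) (Set.mem_univ v)
  intro A _ hA hA'
  rw [← Set.compl_eq_univ_sdiff] at hA' ⊢
  obtain ⟨e, he, heF⟩ := Set.exists_mem_notMem_of_ncard_lt_ncard (hF.trans_le (h A hA hA'))
  exact ⟨e, heF, by grind⟩

theorem IsCubicThreeEdgeConnected.not_cutEdges_subset_pair (hG : G.IsCubicThreeEdgeConnected)
    (hS : S.Nonempty) (hS' : Sᶜ.Nonempty) (a b : E) : ¬ G.cutEdges S ⊆ {a, b} := by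
  intro h
  have := (hG.edgeConnected.le_ncard_cutEdges hS hS').trans (Set.ncard_le_ncard h)
  have := Set.ncard_insert_le a {b}
  rw [Set.ncard_singleton] at this
  omega

end

/-! ### Peeling off connected sets -/

section

variable {V E : Type} {G : Multigraph V E} {D K M U Z Z' : Set V} {v v' : V}
  {e e' f g h h' s t : E}

/-- `M` is connected and contains, inside the region `D`, the ends of `f` and of a further boundary
edge of `D`. -/
def Carries (G : Multigraph V E) (D : Set V) (f : E) (M : Set V) : Prop :=
  G.Linked M ∧ G.Meets f M ∧ ∃ g ∈ G.cutEdges D, g ≠ f ∧ G.Meets g M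

/-- The core `K` of the region `D` cannot be enlarged: what `K` leaves of `D` carries `f`, but no
longer does so once a vertex adjacent to `K` is moved to `K`. -/
structure IsStuck (G : Multigraph V E) (D K : Set V) (f : E) : Prop where
  subset : K ⊆ D
  nonempty : K.Nonempty
  linked : G.Linked D
  mem_cutEdges : f ∈ G.cutEdges D
  carries : G.Carries D f (D \ K)
  not_carries : ∀ v ∈ D \ K, v ∈ G.neighbors K → ∀ M ⊆ (D \ K) \ {v}, ¬ G.Carries D f M

/-- `Z` consists of `v` and of everything that `v` separates from `U` in `M`. -/
structure IsFarSide (G : Multigraph V E) (M U : Set V) (v : V) (Z : Set V) : Prop where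
  subset : Z ⊆ M
  mem : v ∈ Z
  disjoint : Disjoint U Z
  linked : G.Linked Z
  linked_sdiff : G.Linked (M \ Z)
  notMem_between : ∀ e, e ∉ G.between (M \ Z) (Z \ {v})

theorem Linked.exists_isFarSide [Finite V] (hM : G.Linked M) (hU : G.Linked U)
    (hUM : U ⊆ M \ {v}) (hv : v ∈ M) : ∃ Z, G.IsFarSide M U v Z := by
  obtain ⟨C, hUC, hC⟩ := hU.exists_isComponentIn hUM
  have hCM := hC.subset
  refine ⟨M \ C, Set.sdiff_subset, by grind, by grind,
    hC.linkedBy_sdiff hM (linkedBy_singleton _ v) (by grind) ⟨v, rfl⟩, ?_, fun e he => ?_⟩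
  · rw [Set.sdiff_sdiff_cancel_left (hCM.trans Set.sdiff_subset)]
    exact hC.linkedBy
  · exact hC.notMem_between e trivial (by grind)

theorem IsFarSide.mem_sdiff_of_mem_between (hZ : G.IsFarSide M U v Z) (hU : U ⊆ M)
    (he : e ∈ G.between U {v'}) (hv' : v' ∈ M) (hne : v' ≠ v) : v' ∈ M \ Z := by
  have := hZ.notMem_between e
  grind [hZ.disjoint]

theorem IsFarSide.disjoint_of_ne (hZ : G.IsFarSide M U v Z) (hZ' : G.IsFarSide M U v' Z')
    (hU : U ⊆ M) (he : e ∈ G.between U {v}) (he' : e' ∈ G.between U {v'}) (hne : v ≠ v') :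
    Disjoint Z Z' := by
  have hv := hZ'.mem_sdiff_of_mem_between hU he (hZ.subset hZ.mem) hne
  have hv' := hZ.mem_sdiff_of_mem_between hU he' (hZ'.subset hZ'.mem) hne.symm
  have hcomp : G.IsComponentIn Set.univ (M \ {v'}) (M \ Z') :=
    ⟨by grind [hZ'.mem], hZ'.linked_sdiff, fun e _ => by grind [hZ'.notMem_between e, hZ'.subset]⟩
  have hsub := hcomp.subset_of_inter_nonempty hZ.linked (by grind [hZ.subset])
    ⟨v, hZ.mem, hv⟩
  grind

/-- Two edges from `U` and one from `K` use up the degree of `v`, so `Z = {v}`, and no edge is left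
to leave `D` at `v`. -/
theorem IsFarSide.eq_of_mem_between [Finite E] (hG : G.Cubic) (hl : G.Loopless)
    (hZ : G.IsFarSide (D \ K) U v Z) (hK : K ⊆ D) (hU : U ⊆ D \ K)
    (hh : h ∈ G.between {v} K) (hs : s ∈ G.cutEdges D) (hsZ : G.Meets s Z)
    (he : e ∈ G.between U {v}) (he' : e' ∈ G.between U {v}) : e = e' := by
  by_contra hne
  have hvM := hZ.subset hZ.mem
  have hUZ := Set.disjoint_left.1 hZ.disjoint
  have hinc : G.incidentEdges v = {h, e, e'} := by
    apply hG.incidentEdges_eq_of_mem hl <;> grind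
  have hZv : Z ⊆ {v} := by
    by_contra! hcon
    obtain ⟨x, hx, hxv⟩ := Set.not_subset.1 hcon
    obtain ⟨d, hd⟩ := hZ.linked.nonempty_between (A := {v}) (by grind [hZ.mem]) ⟨v, rfl⟩
      ⟨x, hx, hxv⟩
    have hdv : d ∈ G.incidentEdges v := by grind
    grind [hZ.subset]
  have hsv : s ∈ G.incidentEdges v := by grind
  grind

/-- The edge `e` leaves `U` towards a vertex whose far side contains, inside `M = D \ K`, an end
of `s`; the vertex is adjacent to `K`. -/
def LeadsTo (G : Multigraph V E) (D K U : Set V) (e s : E) : Prop :=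
  ∃ v Z, e ∈ G.between U {v} ∧ v ∈ G.neighbors K ∧ G.IsFarSide (D \ K) U v Z ∧
    G.Meets s Z

theorem LeadsTo.not_meets (h : G.LeadsTo D K U e s) (hs : s ∈ G.cutEdges D) (hU : U ⊆ D) :
    ¬ G.Meets s U := by
  obtain ⟨v, Z, -, -, hZ, hsZ⟩ := h
  exact hsZ.not_meets_of_disjoint hs (hZ.subset.trans Set.sdiff_subset) hU hZ.disjoint.symm

theorem LeadsTo.eq [Finite E] (hG : G.Cubic) (hl : G.Loopless) (hK : K ⊆ D) (hU : U ⊆ D \ K)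
    (hs : s ∈ G.cutEdges D) (h : G.LeadsTo D K U e s) (h' : G.LeadsTo D K U e' s) : e = e' := by
  obtain ⟨v, Z, he, ⟨d, hd⟩, hZ, hsZ⟩ := h
  obtain ⟨v', Z', he', -, hZ', hsZ'⟩ := h'
  obtain rfl | hne := eq_or_ne v v'
  · exact hZ.eq_of_mem_between hG hl hK hU hd hs hsZ he he'
  · exact absurd hsZ' (hsZ.not_meets_of_disjoint hs (hZ.subset.trans Set.sdiff_subset)
      (hZ'.subset.trans Set.sdiff_subset) (hZ.disjoint_of_ne hZ' hU he he' hne))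

namespace IsStuck

theorem leadsTo_or [Finite V] (hK : G.IsStuck D K f)
    (hU : G.IsComponentIn Set.univ ((D \ K) \ G.neighbors K) U) (he : e ∈ G.between U (D \ U)) :
    G.LeadsTo D K U e f ∨
      ∀ t ∈ G.cutEdges D, t ≠ f → G.Meets t (D \ K) → G.LeadsTo D K U e t := by
  obtain ⟨v, hvDU, hev⟩ := exists_mem_between_singleton he
  have hvK : v ∉ K := fun hvK => by
    obtain ⟨u, hu, heu⟩ := exists_mem_between_singleton (between_comm U {v} ▸ hev)
    exact (hU.subset hu).2 ⟨e, by grind⟩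
  have hv : v ∈ D \ K := ⟨hvDU.1, hvK⟩
  have hvN : v ∈ G.neighbors K := by
    by_contra hvN
    exact hU.notMem_between e trivial (by grind)
  obtain ⟨Z, hZ⟩ := hK.carries.1.exists_isFarSide hU.linkedBy (by grind [hU.subset]) hv
  by_contra! hcon
  obtain ⟨hf, t, ht, htf, htM, htU⟩ := hcon
  have hfZ : ¬ G.Meets f Z := fun h => hf ⟨v, Z, hev, hvN, hZ, h⟩
  have htZ : ¬ G.Meets t Z := fun h => htU ⟨v, Z, hev, hvN, hZ, h⟩
  have hfM := hK.carries.2.1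
  exact hK.not_carries v hv hvN ((D \ K) \ Z) (by grind [hZ.mem])
    ⟨hZ.linked_sdiff, by grind, t, ht, htf, by grind⟩

theorem ncard_between_le_two [Finite V] [Finite E] (hG : G.Cubic) (hl : G.Loopless)
    (hK : G.IsStuck D K f) (hU : G.IsComponentIn Set.univ ((D \ K) \ G.neighbors K) U) :
    (G.between U (D \ U)).ncard ≤ 2 := by
  obtain ⟨-, -, g, hg, hgf, hgM⟩ := hK.carries
  have hlabel : ∀ e ∈ G.between U (D \ U), ∃ s ∈ ({f, g} : Set E), G.LeadsTo D K U e s :=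
    fun e he => (hK.leadsTo_or hU he).elim (fun h => ⟨f, by simp, h⟩)
      fun h => ⟨g, by simp, h g hg hgf hgM⟩
  choose! label hmem hlead using hlabel
  rw [← Set.ncard_pair hgf.symm]
  refine Set.ncard_le_ncard_of_injOn label hmem fun e he e' he' heq => ?_
  have hcut : label e ∈ G.cutEdges D := by grind [hmem e he, hK.mem_cutEdges]
  exact (hlead e he).eq hG hl hK.subset (hU.subset.trans Set.sdiff_subset) hcut (heq ▸ hlead e' he')

theorem exists_forall_leadsTo [Finite V] (hK : G.IsStuck D K f)
    (hU : G.IsComponentIn Set.univ ((D \ K) \ G.neighbors K) U) (ht : t ∈ G.cutEdges D)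
    (htU : G.Meets t U) :
    ∃ s ∈ G.cutEdges D, ∀ e ∈ G.between U (D \ U), G.LeadsTo D K U e s := by
  have hUM : U ⊆ D \ K := hU.subset.trans Set.sdiff_subset
  have hnot : ∀ e, ¬ G.LeadsTo D K U e t := fun e h =>
    h.not_meets ht (hUM.trans Set.sdiff_subset) htU
  obtain rfl | htf := eq_or_ne t f
  · obtain ⟨-, -, g, hg, hgf, hgM⟩ := hK.carries
    exact ⟨g, hg, fun e he => (hK.leadsTo_or hU he).resolve_left (hnot e) g hg hgf hgM⟩
  · exact ⟨f, hK.mem_cutEdges, fun e he => (hK.leadsTo_or hU he).resolve_right fun h =>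
      hnot e (h t ht htf (htU.mono hUM))⟩

/-- A component `U` of the vertices outside `K` that are not adjacent to `K` would be cut off by two
edges: either at most two edges leave `U` inside `D` and no edge leaves `D` at `U`, or a single edge
leaves `U` inside `D` and only `f` leaves `D` at `U`. -/
theorem subset_neighbors [Finite V] [Finite E] (hG : G.IsCubicThreeEdgeConnected)
    (hK : G.IsStuck D K f)
    (hbridge : ∀ U ⊆ D \ K, U.Nonempty → ¬ G.Meets f U → (G.between U (D \ U)).Nontrivial) :
    D \ K ⊆ G.neighbors K := by
  by_contra hcon
  obtain ⟨u, hu, huN⟩ := Set.not_subset.1 hcon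
  obtain ⟨U, huU, hU⟩ := (linkedBy_singleton Set.univ u).exists_isComponentIn (G := G)
    (S := (D \ K) \ G.neighbors K) (by grind)
  have hUM : U ⊆ D \ K := hU.subset.trans Set.sdiff_subset
  have hUD : U ⊆ D := hUM.trans Set.sdiff_subset
  have hUne : U.Nonempty := ⟨u, huU rfl⟩
  obtain ⟨k, hk⟩ := hK.nonempty
  have hUne' : (D \ U).Nonempty := ⟨k, hK.subset hk, fun h => (hUM h).2 hk⟩
  have hcutU := hG.edgeConnected.le_ncard_cutEdges hUne (hUne'.mono (by grind))
  by_cases hbd : ∃ t ∈ G.cutEdges D, G.Meets t U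
  · obtain ⟨t, ht, htU⟩ := hbd
    obtain ⟨s, hs, hlead⟩ := hK.exists_forall_leadsTo hU ht htU
    have hsub : (G.between U (D \ U)).Subsingleton := fun e he e' he' =>
      (hlead e he).eq hG.cubic hG.loopless hK.subset hUM hs (hlead e' he')
    obtain ⟨a, ha⟩ := hK.linked.nonempty_between (by grind) hUne hUne'
    have hfU : G.Meets f U := by
      by_contra hfU
      exact Set.not_subsingleton_iff.2 (hbridge U hUM hUne hfU) hsub
    refine hG.not_cutEdges_subset_pair hUne (hUne'.mono (by grind)) a f fun x hx => ?_
    obtain hxU | hxD := mem_between_sdiff_or_mem_cutEdges hUD hx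
    · exact Or.inl (hsub hxU ha)
    · by_contra hxaf
      rcases hK.leadsTo_or hU ha with haf | hax
      · exact haf.not_meets hK.mem_cutEdges hUD hfU
      · exact (hax x hxD.1 (by grind) (hxD.2.mono hUM)).not_meets hxD.1
          hUD hxD.2
  · have hsub : G.cutEdges U ⊆ G.between U (D \ U) := fun x hx =>
      (mem_between_sdiff_or_mem_cutEdges hUD hx).resolve_right fun h => hbd ⟨x, h⟩
    have := Set.ncard_le_ncard hsub
    have := hK.ncard_between_le_two hG.cubic hG.loopless hU
    omega

theorem eq_or_eq_of_notMem_inside [Finite E] (hG : G.Cubic) (hl : G.Loopless)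
    (hK : G.IsStuck D K f) (hg : g ∈ G.cutEdges D) (hgf : g ≠ f) (hgM : G.Meets g (D \ K))
    (hv : v ∈ D \ K) (hh : h ∈ G.between {v} K) (hv' : h' ∈ G.incidentEdges v) (hne : h' ≠ h)
    (hin : h' ∉ G.inside (D \ K)) : h' = f ∨ h' = g := by
  by_contra! hcon
  obtain ⟨-, hfM, -⟩ := hK.carries
  have hKD := hK.subset
  obtain ⟨x, -, -, hinc⟩ := hG.exists_incidentEdges_eq hl (by grind) hv' hne.symm
  have hleaf : ∀ e ∈ G.between {v} ((D \ K) \ {v}), e = x := fun e he => by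
    have : e ∈ G.incidentEdges v := by grind
    grind
  have hbd : ∀ t ∈ G.cutEdges D, t ≠ h' → t ∈ G.incidentEdges v → t = x := by grind
  have hfD := hK.mem_cutEdges
  obtain hsing | hnt := ((D \ K) \ {v}).eq_empty_or_nonempty
  · rw [Set.sdiff_eq_empty] at hsing
    have hfv : f ∈ G.incidentEdges v := hfM.mono hsing
    have hgv : g ∈ G.incidentEdges v := hgM.mono hsing
    exact hgf ((hbd g hg hcon.2.symm hgv).trans (hbd f hfD hcon.1.symm hfv).symm)
  · obtain ⟨d, hd⟩ := hK.carries.1.nonempty_between (A := {v}) (by grind) ⟨v, rfl⟩ hnt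
    have hxD : x ∉ G.cutEdges D := by grind
    have hv_out : ∀ t ∈ G.cutEdges D, t ≠ h' → G.Meets t (D \ K) → G.Meets t ((D \ K) \ {v}) := by
      grind
    refine hK.not_carries v hv ⟨h, hh⟩ _ subset_rfl ⟨hK.carries.1.sdiff_singleton ?_,
      hv_out f hfD hcon.1.symm hfM, g, hg, hgf, hv_out g hg hcon.2.symm hgM⟩
    exact fun e he e' he' => (hleaf e he).trans (hleaf e' he').symm

end IsStuck

theorem exists_isStuck [Finite V] {K₀ M₀ : Set V} (hD : G.Linked D) (hK₀ : G.Linked K₀)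
    (hne : K₀.Nonempty) (hK₀D : K₀ ⊆ D) (hM₀ : M₀ ⊆ D \ K₀) (hf : f ∈ G.cutEdges D)
    (hc : G.Carries D f M₀) : ∃ K, K₀ ⊆ K ∧ G.Linked K ∧ G.IsStuck D K f := by
  obtain ⟨K, h0K, ⟨hKD, hK, M, hM, hcM⟩, hmax⟩ := (Set.toFinite {K : Set V | K ⊆ D ∧
    G.Linked K ∧ ∃ M ⊆ D \ K, G.Carries D f M}).exists_le_maximal
    (show K₀ ∈ _ from ⟨hK₀D, hK₀, M₀, hM₀, hc⟩)
  have hKne : K.Nonempty := hne.mono h0K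
  obtain ⟨C, hMC, hC⟩ := hcM.1.exists_isComponentIn hM
  have hCM : C = D \ K := by
    refine hC.subset.antisymm fun x hx => ?_
    by_contra hxC
    exact hx.2 (hmax ⟨Set.sdiff_subset, hC.linkedBy_sdiff hD hK hKD hKne, M, by grind, hcM⟩
      (by grind [hC.subset]) ⟨hx.1, hxC⟩)
  refine ⟨K, h0K, hK, hKD, hKne, hD, hf, ?_, fun v hv ⟨h, hh⟩ M' hM' hc' => ?_⟩
  · obtain ⟨-, hfM, g, hg, hgf, hgM⟩ := hcM
    exact ⟨hCM ▸ hC.linkedBy, hfM.mono hM, g, hg, hgf, hgM.mono hM⟩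
  · exact hv.2 (hmax (y := insert v K) ⟨Set.insert_subset hv.1 hKD,
      hK.insert_of_mem_between trivial hh, M', by grind, hc'⟩ (Set.subset_insert _ _)
      (Set.mem_insert _ _))

end

/-! ### Strips and peripheral cycles -/

section

variable {V E : Type} {G : Multigraph V E} {D H K M Q S : Set V} {v : V} {f g : E}

/-- `Q` is a part of `D` whose removal leaves a nonempty connected rest, in which every vertex has
exactly one edge to the rest, and which is minimal among the connected sets joining the
boundary edges `f` and `g` of `D`, the only two boundary edges of `D` at `Q`. -/
structure IsStrip (G : Multigraph V E) (D Q : Set V) (f g : E) : Prop where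
  subset : Q ⊆ D
  rest_nonempty : (D \ Q).Nonempty
  linked_rest : G.Linked (D \ Q)
  linked : G.Linked Q
  left_mem : f ∈ G.cutEdges D
  right_mem : g ∈ G.cutEdges D
  ne : g ≠ f
  meets_left : G.Meets f Q
  meets_right : G.Meets g Q
  eq_or_eq : ∀ t ∈ G.cutEdges D, G.Meets t Q → t = f ∨ t = g
  existsUnique : ∀ v ∈ Q, ∃! e, e ∈ G.between {v} (D \ Q)
  minimal : ∀ M ⊆ Q, G.Linked M → G.Meets f M → G.Meets g M → M = Q

theorem IsStuck.exists_isStrip_sdiff [Finite E] (hG : G.Cubic) (hl : G.Loopless)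
    (hK : G.IsStuck D K f) (hlink : G.Linked K) (hN : D \ K ⊆ G.neighbors K) :
    ∃ g, G.IsStrip D (D \ K) f g := by
  obtain ⟨hM, hfM, g, hg, hgf, hgM⟩ := hK.carries
  have hfD := hK.mem_cutEdges
  have hDK : D \ (D \ K) = K := Set.sdiff_sdiff_cancel_left hK.subset
  have houter : ∀ v ∈ D \ K, ∀ h ∈ G.between {v} K, ∀ h' ∈ G.incidentEdges v, h' ≠ h →
      h' ∉ G.inside (D \ K) → h' = f ∨ h' = g := fun v hv h hh h' hv' hne =>
    hK.eq_or_eq_of_notMem_inside hG hl hg hgf hgM hv hh hv' hne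
  refine ⟨g, Set.sdiff_subset, hDK.symm ▸ hK.nonempty, hDK.symm ▸ hlink, hM, hfD, hg, hgf, hfM,
    hgM, fun t ht htM => ?_, fun v hv => ?_, fun M' hM' hlink' hfM' hgM' => ?_⟩
  · obtain ⟨v, hv, htv⟩ := htM.exists_mem_incidentEdges
    obtain ⟨h, hh⟩ := hN hv
    exact houter v hv h hh t htv (by grind) (by grind)
  · rw [hDK]
    obtain ⟨h, hh⟩ := hN hv
    refine ⟨h, hh, fun h' hh' => ?_⟩
    by_contra hne
    rcases houter v hv h hh h' (by grind) hne (by grind) with rfl | rfl <;>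
    grind [hK.subset]
  · refine hM'.antisymm fun v hv => ?_
    by_contra hvM
    exact hK.not_carries v hv (hN hv) M' (by grind) ⟨hlink', hfM', g, hg, hgf, hgM'⟩

theorem exists_isStrip [Finite V] [Finite E] {K₀ M₀ : Set V} (hG : G.IsCubicThreeEdgeConnected)
    (hD : G.Linked D) (hK₀ : G.Linked K₀) (hne : K₀.Nonempty) (hK₀D : K₀ ⊆ D) (hM₀ : M₀ ⊆ D \ K₀)
    (hf : f ∈ G.cutEdges D) (hc : G.Carries D f M₀)
    (hbridge : ∀ U ⊆ D \ K₀, U.Nonempty → ¬ G.Meets f U → (G.between U (D \ U)).Nontrivial) :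
    ∃ Q g, G.IsStrip D Q f g ∧ K₀ ⊆ D \ Q := by
  obtain ⟨K, hK₀K, hlink, hK⟩ := exists_isStuck hD hK₀ hne hK₀D hM₀ hf hc
  have hN := hK.subset_neighbors hG fun U hU => hbridge U (by grind)
  obtain ⟨g, hg⟩ := hK.exists_isStrip_sdiff hG.cubic hG.loopless hlink hN
  exact ⟨D \ K, g, hg, by grind⟩

theorem Cubic.ncard_inside_add_ncard_inside [Finite E] (hG : G.Cubic) (hl : G.Loopless)
    (hv : v ∈ S) (hS : ∃! e, e ∈ G.between {v} Sᶜ) :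
    {e ∈ G.inside S | G.src e = v}.ncard + {e ∈ G.inside S | G.tgt e = v}.ncard = 2 := by
  obtain ⟨d, hd, hd'⟩ := hS
  rw [← Set.ncard_union_eq]
  · have hinc : {e ∈ G.inside S | G.src e = v} ∪ {e ∈ G.inside S | G.tgt e = v} =
        G.incidentEdges v \ {d} := by
      ext e
      have := hd' e
      grind
    rw [hinc, Set.ncard_sdiff_singleton_of_mem (by grind), hG.ncard_incidentEdges hl]
  · rw [Set.disjoint_left]
    exact fun e he he' => hl e (he.2.trans he'.2.symm)

theorem isCycle_inside [Finite E] (hG : G.Cubic) (hl : G.Loopless) (hne : S.Nonempty)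
    (hlink : G.Linked S) (hS : ∀ v ∈ S, ∃! e, e ∈ G.between {v} Sᶜ) :
    G.IsCycle (G.inside S) := by
  have hdeg : ∀ v ∈ S, _ := fun v hv => hG.ncard_inside_add_ncard_inside hl hv (hS v hv)
  have htouch : ∀ v, G.touches (G.inside S) v → v ∈ S := by
    rintro v ⟨e, he, rfl | rfl⟩
    exacts [he.1, he.2]
  refine ⟨?_, fun v hv => hdeg v (htouch v hv), fun u v hu hv => ?_⟩
  · obtain ⟨v, hv⟩ := hne
    by_contra hemp
    have := hdeg v hv
    simp [Set.not_nonempty_iff_eq_empty.1 hemp] at this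
  · exact (hlink.inter_inside.mono Set.inter_subset_right).reaches (htouch u hu) (htouch v hv)

theorem peripheral_inside (hne : Sᶜ.Nonempty) (hlink : G.Linked Sᶜ)
    (hS : ∀ v ∈ S, ∃! e, e ∈ G.between {v} Sᶜ) : G.Peripheral (G.inside S) := by
  have hcompl : G.LinkedBy (G.inside S)ᶜ Sᶜ := hlink.inter_inside.mono (by grind)
  have huniv : G.LinkedBy (G.inside S)ᶜ Set.univ := by
    refine hcompl.of_linkedBy_subset (Set.subset_univ _) fun A hA ⟨a, ha⟩ => ?_
    obtain ⟨e, he, -⟩ := hS a (by grind)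
    exact ⟨e, by grind, by grind⟩
  exact ⟨hne.to_subtype.map Subtype.val, fun u v => huniv.reaches trivial trivial⟩

namespace IsStrip

theorem linked_compl (h : G.IsStrip H Q f g) (hG : G.IsCubicThreeEdgeConnected)
    (hH : G.Linked Hᶜ) : G.Linked Qᶜ := by
  have hHc : Hᶜ.Nonempty := by
    rcases mem_cutEdges.1 h.left_mem with h | h
    exacts [⟨_, h.2⟩, ⟨_, h.1⟩]
  obtain ⟨d, hd, hdfg⟩ := Set.not_subset.1 (hG.not_cutEdges_subset_pair
    (h.rest_nonempty.mono Set.sdiff_subset) hHc f g)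
  have hdQ : ¬ G.Meets d Q := fun hm => hdfg (h.eq_or_eq d hd hm)
  have hQ : Qᶜ = (H \ Q) ∪ Hᶜ := by grind [h.subset]
  exact hQ ▸ h.linked_rest.union hH (e := d) trivial (by grind)

theorem exists_isStrip_compl [Finite V] [Finite E] (h : G.IsStrip H Q f g)
    (hG : G.IsCubicThreeEdgeConnected) (hH : G.Linked Hᶜ) :
    ∃ M ⊆ Hᶜ, G.IsStrip Qᶜ M f g := by
  have hQH := h.subset
  have hcut : ∀ t ∈ G.cutEdges H, G.Meets t Q → t ∈ G.cutEdges Qᶜ ∧ G.Meets t Hᶜ := by grind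
  obtain ⟨hf, hfH⟩ := hcut f h.left_mem h.meets_left
  obtain ⟨hg, hgH⟩ := hcut g h.right_mem h.meets_right
  have hbridge : ∀ U ⊆ Qᶜ \ (H \ Q), U.Nonempty → ¬ G.Meets f U →
      (G.between U (Qᶜ \ U)).Nontrivial := by
    intro U hU hUne hfU
    have hsub : G.cutEdges U ⊆ insert g (G.between U (Qᶜ \ U)) := fun x hx => by
      by_contra hcon
      have := h.eq_or_eq x (by grind) (by grind)
      grind
    have := hG.edgeConnected.le_ncard_cutEdges hUne (h.rest_nonempty.mono (by grind))
    have := (Set.ncard_le_ncard hsub).trans (Set.ncard_insert_le g _)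
    exact Set.one_lt_ncard_iff_nontrivial.1 (by omega)
  obtain ⟨M, g', hM, hsub⟩ := exists_isStrip hG (M₀ := Hᶜ) (h.linked_compl hG hH) h.linked_rest
    h.rest_nonempty (by grind) (by grind) hf ⟨hH, hfH, g, hg, h.ne, hgH⟩ hbridge
  have hMQ := hM.subset
  have hMH : M ⊆ Hᶜ := fun x hx hxH => (hsub ⟨hxH, hMQ hx⟩).2 hx
  obtain rfl : g' = g := (h.eq_or_eq g' (by grind [hM.right_mem, hM.meets_right])
    (by grind [hM.right_mem, hM.meets_right])).resolve_left hM.ne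
  exact ⟨M, hMH, hM⟩

theorem mem_between_of_compl (h : G.IsStrip H Q f g) (hM : G.IsStrip Qᶜ M f g) (hMH : M ⊆ Hᶜ) :
    f ∈ G.between Q M ∧ g ∈ G.between Q M := by
  have := h.subset
  grind [h.meets_left, hM.meets_left, h.meets_right, hM.meets_right, h.left_mem, h.right_mem]

theorem existsUnique_of_compl (h : G.IsStrip H Q f g) (hM : G.IsStrip Qᶜ M f g) (hMH : M ⊆ Hᶜ) :
    ∀ v ∈ Q ∪ M, ∃! e, e ∈ G.between {v} (Q ∪ M)ᶜ := by
  obtain ⟨hf, hg⟩ := h.mem_between_of_compl hM hMH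
  rintro v (hv | hv)
  · obtain ⟨e, he, huniq⟩ := h.existsUnique v hv
    refine ⟨e, by grind, fun d hd => huniq d ?_⟩
    by_contra hcon
    have hdH : d ∈ G.cutEdges H := by grind [h.subset]
    have := h.eq_or_eq d hdH (by grind)
    grind
  · rw [Set.compl_union, ← Set.sdiff_eq]
    exact hM.existsUnique v hv

/-- Outside `H` the strip closes up to a peripheral cycle through `f` and `g`. -/
theorem ncard_inside_lt [Finite V] [Finite E] (h : G.IsStrip H Q f g)
    (hG : G.IsCubicThreeEdgeConnected) (hH : G.Linked Hᶜ) {q : ℕ}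
    (hq : ∀ C, G.IsCycle C → G.Peripheral C → C.ncard ≤ q) : (G.inside Q).ncard < q := by
  obtain ⟨M, hMH, hM⟩ := h.exists_isStrip_compl hG hH
  obtain ⟨hf, -⟩ := h.mem_between_of_compl hM hMH
  obtain ⟨v, hv, -⟩ := h.meets_left.exists_mem_incidentEdges
  have huniq := h.existsUnique_of_compl hM hMH
  have hcompl : (Q ∪ M)ᶜ = Qᶜ \ M := by rw [Set.compl_union, Set.sdiff_eq]
  have hcycle : G.IsCycle (G.inside (Q ∪ M)) :=
    isCycle_inside hG.cubic hG.loopless ⟨v, Or.inl hv⟩ (h.linked.union hM.linked trivial hf) huniq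
  refine lt_of_lt_of_le (Set.ncard_lt_ncard ?_) (hq _ hcycle
    (peripheral_inside (hcompl ▸ hM.rest_nonempty) (hcompl ▸ hM.linked_rest) huniq))
  exact Set.ssubset_iff_exists.2 ⟨by grind, f, by grind, by grind [hM.subset]⟩

end IsStrip

end

/-! ### Cycles and boundaries modulo two -/

section

variable {V E : Type} {G : Multigraph V E} {P : Set E} {S : Set V} {u v : V} {e f : E}

/-- The boundary at `w` of a chain `φ` with coefficients modulo two. -/
noncomputable def boundary [Fintype E] (G : Multigraph V E) (φ : E → ZMod 2) (w : V) : ZMod 2 :=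
  ∑ e, φ e * ((if G.src e = w then 1 else 0) + (if G.tgt e = w then 1 else 0))

theorem boundary_add [Fintype E] (φ ψ : E → ZMod 2) (w : V) :
    G.boundary (φ + ψ) w = G.boundary φ w + G.boundary ψ w := by
  simp only [boundary, Pi.add_apply, add_mul, Finset.sum_add_distrib]

theorem boundary_single [Fintype E] (e : E) (w : V) :
    G.boundary (Pi.single e 1) w =
      (if G.src e = w then 1 else 0) + (if G.tgt e = w then 1 else 0) := by
  simp [boundary, Pi.single_apply]

theorem boundary_indicator [Fintype E] (C : Set E) (w : V) :
    G.boundary (C.indicator 1) w =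
      (({e ∈ C | G.src e = w}.ncard + {e ∈ C | G.tgt e = w}.ncard : ℕ) : ZMod 2) := by
  simp only [boundary, mul_add, Finset.sum_add_distrib, Nat.cast_add, Set.ncard_eq_toFinset_card',
    Set.indicator_apply, Pi.one_apply, ite_zero_mul_ite_zero, mul_one, Finset.sum_boole,
    Set.toFinset_ofPred]

theorem boundary_eq_ncard_support [Fintype E] (φ : E → ZMod 2) (w : V) :
    G.boundary φ w = (({e ∈ Function.support φ | G.src e = w}.ncard +
      {e ∈ Function.support φ | G.tgt e = w}.ncard : ℕ) : ZMod 2) := by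
  rw [← boundary_indicator]
  congr 1
  ext e
  rcases (by decide : ∀ x : ZMod 2, x = 0 ∨ x = 1) (φ e) with h | h <;> simp [h]

theorem sum_boundary [Fintype E] (φ : E → ZMod 2) (A : Finset V) :
    ∑ w ∈ A, G.boundary φ w = ∑ e with e ∈ G.cutEdges A, φ e := by
  simp only [boundary]
  rw [Finset.sum_comm, Finset.sum_filter]
  refine Finset.sum_congr rfl fun e _ => ?_
  rw [← Finset.mul_sum, Finset.sum_add_distrib, Finset.sum_ite_eq, Finset.sum_ite_eq]
  by_cases hs : G.src e ∈ A <;> by_cases ht : G.tgt e ∈ A <;>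
    simp [mem_cutEdges, hs, ht, CharTwo.add_self_eq_zero]

theorem IsCycle.boundary_indicator_eq_zero [Fintype E] {C : Set E} (hC : G.IsCycle C) (w : V) :
    G.boundary (C.indicator 1) w = 0 := by
  rw [boundary_indicator]
  by_cases hw : G.touches C w
  · rw [hC.2.1 w hw]
    rfl
  · have hsrc : {e ∈ C | G.src e = w} = ∅ :=
      Set.eq_empty_of_forall_notMem fun e he => hw ⟨e, he.1, Or.inl he.2⟩
    have htgt : {e ∈ C | G.tgt e = w} = ∅ :=
      Set.eq_empty_of_forall_notMem fun e he => hw ⟨e, he.1, Or.inr he.2⟩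
    simp [hsrc, htgt]

theorem IsCycle.exists_ne_mem_cutEdges [Finite V] [Finite E] {C : Set E} (hC : G.IsCycle C)
    (he : e ∈ C) (heS : e ∈ G.cutEdges S) : ∃ t ∈ C, t ≠ e ∧ t ∈ G.cutEdges S := by
  have := Fintype.ofFinite V
  have := Fintype.ofFinite E
  by_contra! hcon
  have hsum := G.sum_boundary (C.indicator 1) S.toFinset
  rw [Finset.sum_eq_zero fun w _ => hC.boundary_indicator_eq_zero w, Set.coe_toFinset,
    Finset.sum_eq_single e] at hsum
  · simp [he] at hsum
  · intro t ht hte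
    exact Set.indicator_of_notMem (fun htC => hcon t htC hte (by simpa using ht)) _
  · simp [heS]

theorem Reaches.exists_boundary_eq [Fintype E] (h : G.Reaches (· ∈ P) u v) :
    ∃ φ : E → ZMod 2, Function.support φ ⊆ P ∧
      ∀ w, G.boundary φ w = (if u = w then 1 else 0) + (if v = w then 1 else 0) := by
  induction h with
  | refl => exact ⟨0, by simp, fun w => by simp [boundary, CharTwo.add_self_eq_zero]⟩
  | @tail b c _ hbc ih =>
    obtain ⟨φ, hφ, hbd⟩ := ih
    obtain ⟨e, he, hec⟩ := hbc
    refine ⟨φ + Pi.single e 1, (Function.support_add _ _).trans (Set.union_subset hφ ?_),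
      fun w => ?_⟩
    · exact Pi.support_single_subset.trans (Set.singleton_subset_iff.2 he)
    · rw [boundary_add, hbd, boundary_single]
      have htwo := CharTwo.add_self_eq_zero (if b = w then 1 else 0 : ZMod 2)
      rcases hec with ⟨rfl, rfl⟩ | ⟨rfl, rfl⟩ <;> linear_combination htwo

theorem Reaches.symm {Q : E → Prop} (h : G.Reaches Q u v) : G.Reaches Q v u :=
  have : Std.Symm (G.adjVia Q) := ⟨fun _ _ ⟨e, he, h⟩ => ⟨e, he, h.symm⟩⟩
  Relation.ReflTransGen.stdSymm.symm _ _ h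

/-- The edges of `P` in the component of `v`. -/
def componentEdges (G : Multigraph V E) (P : Set E) (v : V) : Set E :=
  {e ∈ P | G.Reaches (· ∈ P) v (G.src e)}

theorem reaches_of_touches_componentEdges (h : G.touches (G.componentEdges P v) u) :
    G.Reaches (· ∈ P) v u := by
  obtain ⟨e, ⟨he, hr⟩, rfl | rfl⟩ := h
  exacts [hr, hr.tail ⟨e, he, Or.inl ⟨rfl, rfl⟩⟩]

theorem Reaches.mem_componentEdges (h : G.Reaches (· ∈ P) v u) (he : e ∈ P)
    (hu : e ∈ G.incidentEdges u) : e ∈ G.componentEdges P v := by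
  rcases hu with rfl | rfl
  exacts [⟨he, h⟩, ⟨he, h.tail ⟨e, he, Or.inr ⟨rfl, rfl⟩⟩⟩]

theorem Reaches.reaches_componentEdges (h : G.Reaches (· ∈ P) v u) :
    G.Reaches (· ∈ G.componentEdges P v) v u := by
  induction h with
  | refl => exact Relation.ReflTransGen.refl
  | tail hvb hbc ih =>
    obtain ⟨e, he, hec⟩ := hbc
    exact ih.tail ⟨e, Reaches.mem_componentEdges hvb he (hec.imp And.left And.right), hec⟩

theorem isCycle_componentEdges [Fintype E] (hG : G.Cubic) (hl : G.Loopless) {φ : E → ZMod 2}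
    (h0 : ∀ w, G.boundary φ w = 0) (hne : (G.componentEdges (Function.support φ) v).Nonempty) :
    G.IsCycle (G.componentEdges (Function.support φ) v) := by
  set C := G.componentEdges (Function.support φ) v
  have hr : ∀ w, G.touches C w → G.Reaches (· ∈ Function.support φ) v w := fun w hw =>
    reaches_of_touches_componentEdges hw
  refine ⟨hne, fun w hw => ?_, fun u w hu hw => (hr u hu).reaches_componentEdges.symm.trans
    (hr w hw).reaches_componentEdges⟩
  have hsrc : {e ∈ Function.support φ | G.src e = w} = {e ∈ C | G.src e = w} := Set.ext fun e =>
    ⟨fun h => ⟨(hr w hw).mem_componentEdges h.1 (Or.inl h.2), h.2⟩, fun h => ⟨h.1.1, h.2⟩⟩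
  have htgt : {e ∈ Function.support φ | G.tgt e = w} = {e ∈ C | G.tgt e = w} := Set.ext fun e =>
    ⟨fun h => ⟨(hr w hw).mem_componentEdges h.1 (Or.inr h.2), h.2⟩, fun h => ⟨h.1.1, h.2⟩⟩
  have hdeg := h0 w
  rw [boundary_eq_ncard_support, ZMod.natCast_eq_zero_iff, hsrc, htgt] at hdeg
  have hdisj : Disjoint {e ∈ C | G.src e = w} {e ∈ C | G.tgt e = w} :=
    Set.disjoint_left.2 fun e h h' => hl e (h.2.trans h'.2.symm)
  rw [← Set.ncard_union_eq hdisj] at hdeg ⊢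
  have hle : ({e ∈ C | G.src e = w} ∪ {e ∈ C | G.tgt e = w}).ncard ≤ 3 := by
    rw [← hG.ncard_incidentEdges hl w]
    exact Set.ncard_le_ncard fun e he => he.imp And.right And.right
  have hpos : 0 < ({e ∈ C | G.src e = w} ∪ {e ∈ C | G.tgt e = w}).ncard := by
    obtain ⟨e, he, hew⟩ := hw
    exact (Set.ncard_pos).2 ⟨e, hew.imp (⟨he, ·⟩) (⟨he, ·⟩)⟩
  omega

theorem LinkedBy.exists_isCycle [Finite E] (hG : G.Cubic) (hl : G.Loopless) (h : G.LinkedBy P S)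
    (hf : f ∈ G.inside S) (hfP : f ∉ P) :
    ∃ C, G.IsCycle C ∧ f ∈ C ∧ C ⊆ insert f (P ∩ G.inside S) := by
  have := Fintype.ofFinite E
  obtain ⟨φ, hφ, hbd⟩ := (h.inter_inside.reaches hf.1 hf.2).exists_boundary_eq
  have hφf : φ f = 0 := by
    by_contra hne
    exact hfP (hφ hne).1
  have h0 : ∀ w, G.boundary (φ + Pi.single f 1) w = 0 := fun w => by
    rw [boundary_add, hbd, boundary_single, CharTwo.add_self_eq_zero]
  have hfC : f ∈ G.componentEdges (Function.support (φ + Pi.single f 1)) (G.src f) :=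
    ⟨by simp [hφf], Relation.ReflTransGen.refl⟩
  refine ⟨_, isCycle_componentEdges hG hl h0 ⟨f, hfC⟩, hfC, fun e he => ?_⟩
  by_cases hef : e = f
  · exact Or.inl hef
  · exact Or.inr (hφ (by simpa [Pi.single_apply, hef] using he.1))

theorem LinkedBy.ncard_le [Finite V] [Finite E] (h : G.LinkedBy P S) :
    S.ncard ≤ P.ncard + 1 := by
  rcases S.eq_empty_or_nonempty with rfl | ⟨u, hu⟩
  · simp
  obtain ⟨A, -, ⟨⟨hAS, hAne, hA⟩, hmax⟩⟩ := (Set.toFinite {A : Set V | A ⊆ S ∧ A.Nonempty ∧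
    A.ncard ≤ (P ∩ G.inside A).ncard + 1}).exists_le_maximal
    (show {u} ∈ _ from ⟨by simpa, ⟨u, rfl⟩, by simp⟩)
  suffices S = A by
    subst this
    have hPS : (P ∩ G.inside S).ncard ≤ P.ncard := Set.ncard_le_ncard Set.inter_subset_left
    omega
  by_contra hSA
  obtain ⟨t, htP, ht⟩ := h A hAS hAne (Set.sdiff_nonempty.2 fun h => hSA (h.antisymm hAS))
  obtain ⟨v, ⟨hvS, hvA⟩, hv⟩ := exists_mem_between_singleton ht
  have hsub : insert t (P ∩ G.inside A) ⊆ P ∩ G.inside (insert v A) := by grind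
  have hlt := Set.ncard_le_ncard hsub
  rw [Set.ncard_insert_of_notMem (by grind)] at hlt
  refine hvA (hmax (y := insert v A) ⟨Set.insert_subset hvS hAS, ⟨v, Or.inl rfl⟩, ?_⟩
    (Set.subset_insert v A) (Or.inl rfl))
  rw [Set.ncard_insert_of_notMem hvA]
  omega

theorem LinkedBy.isForest [Finite V] [Finite E] (hP : G.LinkedBy P Set.univ)
    (hcard : P.ncard + 1 ≤ Nat.card V) : G.IsForest P := by
  intro C hC hCP
  obtain ⟨e, he⟩ := hC.1
  have hlink : G.LinkedBy (P \ {e}) Set.univ := by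
    intro A hA hne hne'
    obtain ⟨t, ht, htb⟩ := hP A hA hne hne'
    by_cases hte : t = e
    · obtain ⟨s, hs, hst, hsA⟩ := hC.exists_ne_mem_cutEdges (S := A) he (by grind)
      exact ⟨s, ⟨hCP hs, hst⟩, by grind⟩
    · exact ⟨t, ⟨ht, hte⟩, htb⟩
  have hle := hlink.ncard_le
  rw [Set.ncard_sdiff_singleton_of_mem (hCP he), Set.ncard_univ] at hle
  have := (Set.ncard_pos).2 ⟨e, hCP he⟩
  omega

end

/-! ### Partial bases -/

section

variable {V E : Type} {G : Multigraph V E} {r : V} {R P B B' : Set E}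
  {H Y Q D D' A S : Set V} {b e f g x y : E}

/-- `R` is `2`-closed with respect to the cycles of `G` avoiding the root `r`, that is, `R` meets
`G - r` in a `2`-closed set. -/
def ClosedAvoiding (G : Multigraph V E) (r : V) (R : Set E) : Prop :=
  ∀ C, G.IsCycle C → ¬ G.touches C r → (C \ R).Nonempty → 3 ≤ (C \ R).ncard

theorem ClosedAvoiding.mem [Finite E] (hR : G.ClosedAvoiding r R)
    (hG : G.IsCubicThreeEdgeConnected) (hr : r ∉ S) (h : G.LinkedBy P S) (hP : P ⊆ insert g R)
    (hf : f ∈ G.inside S) (hfP : f ∉ P) : f ∈ R := by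
  by_contra hfR
  obtain ⟨C, hC, hfC, hCP⟩ := h.exists_isCycle hG.cubic hG.loopless hf hfP
  have havoid : ¬ G.touches C r := by
    rintro ⟨e, he, her⟩
    grind [hCP he]
  have hsub : C \ R ⊆ {f, g} := by grind
  have hle := (Set.ncard_le_ncard hsub).trans (Set.ncard_insert_le f {g})
  rw [Set.ncard_singleton] at hle
  have := hR C hC havoid ⟨f, hfC, hfR⟩
  omega

theorem ClosedAvoiding.mem_of_mem_between [Finite E] (hR : G.ClosedAvoiding r R)
    (hG : G.IsCubicThreeEdgeConnected) (hrA : r ∉ A) (hrS : r ∉ S) (hA : G.Linked A)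
    (hS : G.Linked S) (hAS : Disjoint A S) (hAR : G.inside A ⊆ R) (hSR : G.inside S ⊆ R)
    (hx : x ∈ G.between A S) (hy : y ∈ G.between A S) (hxy : x ≠ y) : x ∈ R := by
  have hlink : G.LinkedBy (insert y (G.inside A ∪ G.inside S)) (A ∪ S) :=
    (hA.inter_inside.mono (by grind)).union (hS.inter_inside.mono (by grind)) (Or.inl rfl) hy
  refine hR.mem hG (by grind) hlink (g := y) (by grind) (by grind) (by grind)

/-- A partial base of the induced subgraph `G[H]`: its complement is a spanning tree of `G[H]`, and
together with the edges of `G[Y]` it generates all edges of `G[H ∪ Y]` except possibly `e`. -/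
structure IsPartialBase (G : Multigraph V E) (r : V) (H Y : Set V) (e : E) (B : Set E) : Prop where
  subset : B ⊆ G.inside H
  linked : G.LinkedBy (G.inside H \ B) H
  ncard : (G.inside H \ B).ncard + 1 = H.ncard
  closure : ∀ R, G.ClosedAvoiding r R → B ⊆ R → G.inside Y ⊆ R → G.inside (H ∪ Y) \ {e} ⊆ R

theorem IsPartialBase.of_empty [Finite E] (h : G.IsPartialBase r H ∅ e B)
    (hG : G.IsCubicThreeEdgeConnected) (hH : G.Linked H) (hY : G.Linked Y) (hHY : Disjoint H Y)
    (hrH : r ∉ H) (hrY : r ∉ Y) (he : e ∈ G.cutEdges H)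
    (hcut : ∀ f ∈ G.cutEdges H, f ≠ e → f ∈ G.between H Y) (hthree : 3 ≤ (G.cutEdges H).ncard) :
    G.IsPartialBase r H Y e B := by
  refine ⟨h.subset, h.linked, h.ncard, fun R hR hBR hYR x hx => ?_⟩
  have hHR : G.inside H ⊆ R := fun y hy =>
    h.closure R hR hBR (by grind) ⟨by simpa using hy, by grind⟩
  by_cases hxin : x ∈ G.inside H ∪ G.inside Y
  · exact Set.union_subset hHR hYR hxin
  obtain ⟨y, hy, hyx⟩ : ∃ y ∈ G.cutEdges H, y ∉ ({e, x} : Set E) := by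
    refine Set.exists_mem_notMem_of_ncard_lt_ncard ?_
    have := Set.ncard_insert_le e {x}
    rw [Set.ncard_singleton] at this
    omega
  exact hR.mem_of_mem_between hG hrH hrY hH hY hHY hHR hYR (by grind) (hcut y hy (by grind))
    (by grind)

theorem IsPartialBase.union_of_bridge [Finite V] [Finite E] (h : G.IsPartialBase r D Y b B)
    (h' : G.IsPartialBase r D' (Y ∪ D) e B') (hDD' : Disjoint D D')
    (hD'Y : Disjoint D' Y) (hb : G.between D D' = {b}) :
    G.IsPartialBase r (D ∪ D') Y e (B ∪ B') := by
  have hbmem : b ∈ G.between D D' := by rw [hb]; rfl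
  have hbuniq : ∀ x ∈ G.between D D', x = b := fun x hx => by rwa [hb] at hx
  have htree : G.inside (D ∪ D') \ (B ∪ B') =
      insert b ((G.inside D \ B) ∪ (G.inside D' \ B')) := by
    ext x
    have := hbuniq x
    grind [h.subset, h'.subset]
  refine ⟨by grind [h.subset, h'.subset], ?_, ?_, fun R hR hBR hYR => ?_⟩
  · rw [htree]
    exact (h.linked.mono (by grind)).union (h'.linked.mono (by grind)) (Or.inl rfl) hbmem
  · rw [htree, Set.ncard_insert_of_notMem (by grind), Set.ncard_union_eq (by grind),
      Set.ncard_union_eq hDD', ← h.ncard, ← h'.ncard]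
    ring
  · have hDYR : G.inside (Y ∪ D) ⊆ R := fun x hx =>
      h.closure R hR (by grind) hYR ⟨by rwa [Set.union_comm], by grind⟩
    have := h'.closure R hR (by grind) hDYR
    rwa [Set.union_comm Y, ← Set.union_assoc, Set.union_comm D'] at this

namespace IsStrip

theorem ncard_between (h : G.IsStrip H Q f g) :
    (G.between Q (H \ Q)).ncard = Q.ncard := by
  have : Nonempty E := ⟨f⟩
  choose! φ hφ hφ' using h.existsUnique
  have himage : G.between Q (H \ Q) = φ '' Q := by
    ext x
    constructor
    · rintro (hx | hx)
      · exact ⟨_, hx.1, (hφ' _ hx.1 x (Or.inl ⟨rfl, hx.2⟩)).symm⟩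
      · exact ⟨_, hx.2, (hφ' _ hx.2 x (Or.inr ⟨hx.1, rfl⟩)).symm⟩
    · rintro ⟨v, hv, rfl⟩
      grind [hφ v hv]
  rw [himage]
  refine Set.InjOn.ncard_image fun u hu v hv huv => ?_
  grind [hφ u hu, hφ v hv]

theorem ncard_inside [Finite E] (h : G.IsStrip H Q f g) :
    (G.inside H).ncard = (G.inside (H \ Q)).ncard + (G.inside Q).ncard + Q.ncard := by
  have hsplit : G.inside H = (G.inside (H \ Q) ∪ G.inside Q) ∪ G.between Q (H \ Q) := by
    ext x
    grind [h.subset]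
  rw [hsplit, Set.ncard_union_eq (by grind), Set.ncard_union_eq (by grind), h.ncard_between]

theorem isPartialBase [Finite V] [Finite E] (h : G.IsStrip H Q f g)
    (hcl : ∀ R, G.ClosedAvoiding r R → G.inside Y ⊆ R → G.inside Q ⊆ R → G.inside (Y ∪ Q) ⊆ R)
    (hx : x ∈ G.inside (H ∪ Y) → x = e) (hB : G.IsPartialBase r (H \ Q) (Y ∪ Q) x B) :
    G.IsPartialBase r H Y e (B ∪ G.inside Q) := by
  have htree : G.inside H \ (B ∪ G.inside Q) =
      (G.inside (H \ Q) \ B) ∪ G.between Q (H \ Q) := by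
    ext x
    grind [hB.subset, h.subset]
  refine ⟨by grind [hB.subset, h.subset], ?_, ?_, fun R hR hBR hYR d hd => ?_⟩
  · rw [htree]
    refine LinkedBy.of_linkedBy_subset (hB.linked.mono Set.subset_union_left) Set.sdiff_subset ?_
    rintro A hA ⟨a, ha⟩
    obtain ⟨d, hd, -⟩ := h.existsUnique a (by grind)
    exact ⟨d, Or.inr (by grind), by grind⟩
  · rw [htree, Set.ncard_union_eq (by grind), h.ncard_between, ← Set.ncard_sdiff_add_ncard_of_subset
      h.subset, ← hB.ncard]
    ring
  · refine hB.closure R hR (by grind) (hcl R hR hYR (by grind)) ⟨?_, ?_⟩ <;> grind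

end IsStrip

end

/-! ### Bridgeless parts -/

section

variable {V E : Type} {G : Multigraph V E} {H J K N C : Set V} {c u v w : V} {a b : E}

/-- The subgraph induced on `H` has no edge cut with at most one edge, so it is connected and
has no bridge. -/
def Bridgeless (G : Multigraph V E) (H : Set V) : Prop :=
  ∀ U ⊆ H, U.Nonempty → (H \ U).Nonempty → (G.between U (H \ U)).Nontrivial

theorem Bridgeless.linked (h : G.Bridgeless H) : G.Linked H := fun U hU hne hne' =>
  let ⟨e, he, _⟩ := h U hU hne hne'
  ⟨e, trivial, he⟩

theorem Bridgeless.linked_sdiff_singleton [Finite E] (h : G.Bridgeless H) (hG : G.Cubic)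
    (hl : G.Loopless) (hv : v ∈ H) : G.Linked (H \ {v}) := by
  intro A hA hne hne'
  by_contra! hcon
  replace hcon : ∀ t, t ∉ G.between A ((H \ {v}) \ A) := fun t => hcon t trivial
  have hAH : A ⊆ H := fun x hx => (hA hx).1
  obtain ⟨x, hx, y, hy, hxy⟩ := h A hAH hne ⟨v, hv, fun hvA => (hA hvA).2 rfl⟩
  have hat : ∀ t ∈ G.between A (H \ A), t ∈ G.incidentEdges v := fun t ht => by
    grind [hcon t]
  obtain ⟨z, -, -, hz⟩ := hG.exists_incidentEdges_eq hl (hat x hx) (hat y hy) hxy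
  obtain ⟨s, hs, t, ht, hst⟩ := h (insert v A) (Set.insert_subset hv hAH) ⟨v, Or.inl rfl⟩
    (hne'.mono (by grind))
  have huniq : ∀ t ∈ G.between (insert v A) (H \ insert v A), t = z := fun t ht => by
    have htv : t ∈ G.incidentEdges v := by grind [hcon t]
    rw [hz] at htv
    rcases htv with rfl | rfl | rfl <;> grind
  exact hst ((huniq s hs).trans (huniq t ht).symm)

theorem Bridgeless.eq_of_mem_cutEdges [Finite E] (h : G.Bridgeless H) (hG : G.Cubic)
    (hl : G.Loopless) (hv : v ∈ H) (hne : (H \ {v}).Nonempty) (ha : a ∈ G.cutEdges H)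
    (hb : b ∈ G.cutEdges H) (hav : a ∈ G.incidentEdges v) (hbv : b ∈ G.incidentEdges v) :
    a = b := by
  by_contra hab
  obtain ⟨z, -, -, hz⟩ := hG.exists_incidentEdges_eq hl hav hbv hab
  obtain ⟨s, hs, t, ht, hst⟩ := h {v} (by simpa) ⟨v, rfl⟩ hne
  have huniq : ∀ t ∈ G.between {v} (H \ {v}), t = z := fun t ht => by
    have htv : t ∈ G.incidentEdges v := by grind
    rw [hz] at htv
    rcases htv with rfl | rfl | rfl <;> grind
  exact hst ((huniq s hs).trans (huniq t ht).symm)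

theorem exists_mem_incidentEdges_of_mem_cutEdges (ha : a ∈ G.cutEdges H) :
    ∃ v ∈ H, a ∈ G.incidentEdges v := by
  rcases ha with ha | ha
  exacts [⟨_, ha.1, Or.inl rfl⟩, ⟨_, ha.2, Or.inr rfl⟩]

theorem Bridgeless.exists_isStrip_of_carries [Finite V] [Finite E] {M : Set V}
    (h : G.Bridgeless H) (hG : G.IsCubicThreeEdgeConnected) (hK : G.Linked K) (hne : K.Nonempty)
    (hKH : K ⊆ H) (hM : M ⊆ H \ K) (ha : a ∈ G.cutEdges H) (hc : G.Carries H a M) :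
    ∃ Q g, G.IsStrip H Q a g ∧ K ⊆ H \ Q :=
  Multigraph.exists_isStrip hG h.linked hK hne hKH hM ha hc fun U hU hUne _ =>
    h U (by grind) hUne (hne.mono (by grind))

theorem Bridgeless.exists_isStrip [Finite V] [Finite E] (h : G.Bridgeless H)
    (hG : G.IsCubicThreeEdgeConnected) (hne : H.Nontrivial) {a b c : E} (ha : a ∈ G.cutEdges H)
    (hb : b ∈ G.cutEdges H) (hc : c ∈ G.cutEdges H) (hab : a ≠ b) (hac : a ≠ c) (hbc : b ≠ c) :
    ∃ Q g, G.IsStrip H Q a g ∧ ¬ G.Meets c Q := by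
  obtain ⟨v, hv, hcv⟩ := exists_mem_incidentEdges_of_mem_cutEdges hc
  have hne' : (H \ {v}).Nonempty := hne.exists_ne v
  have hmeets : ∀ t ∈ G.cutEdges H, t ≠ c → G.Meets t (H \ {v}) := fun t ht htc => by
    have := fun htv => htc (h.eq_of_mem_cutEdges hG.cubic hG.loopless hv hne' ht hc htv hcv)
    grind
  obtain ⟨Q, g, hQ, hvQ⟩ := h.exists_isStrip_of_carries hG (linkedBy_singleton Set.univ v) ⟨v, rfl⟩
    (by simpa) subset_rfl ha ⟨h.linked_sdiff_singleton hG.cubic hG.loopless hv, hmeets a ha hac, b,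
      hb, hab.symm, hmeets b hb hbc⟩
  have hvQ' : v ∉ Q := (hvQ rfl).2
  exact ⟨Q, g, hQ, by grind [hQ.subset]⟩

/-! ### Splitting a part of a bridgeless part -/

theorem Linked.exists_isComponentIn_forall_mem [Finite V] (hJ : G.Linked J) (hc : c ∈ J)
    (hN : N ⊆ J \ {c}) (hne : N.Nonempty) :
    ∃ v ∈ N, ∃ C, G.IsComponentIn Set.univ (J \ {v}) C ∧ c ∈ C ∧ ∀ u ∈ N, u ≠ v → u ∈ C := by
  have hcomp : ∀ v ∈ N, ∃ C, {c} ⊆ C ∧ G.IsComponentIn Set.univ (J \ {v}) C := fun v hv =>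
    (linkedBy_singleton Set.univ c).exists_isComponentIn (by grind)
  obtain ⟨v₀, hv₀⟩ := hne
  obtain ⟨C, -, ⟨v, hvN, hcC, hC⟩, hmax⟩ := (Set.toFinite {C | ∃ v ∈ N, {c} ⊆ C ∧
    G.IsComponentIn Set.univ (J \ {v}) C}).exists_le_maximal
    (show (hcomp v₀ hv₀).choose ∈ _ from ⟨v₀, hv₀, (hcomp v₀ hv₀).choose_spec⟩)
  refine ⟨v, hvN, C, hC, hcC rfl, fun u huN huv => ?_⟩
  by_contra huC
  obtain ⟨C', hcC', hC'⟩ := hcomp u huN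
  have hCJ := hC.subset
  have hCC' : C ⊆ C' := hC'.subset_of_inter_nonempty hC.linkedBy (by grind) ⟨c, hcC rfl, hcC' rfl⟩
  obtain ⟨s, hs⟩ := hJ.nonempty_between (A := C) (by grind) ⟨c, hcC rfl⟩ ⟨v, by grind⟩
  have hvC' : v ∈ C' := by
    grind [hC.notMem_between s trivial, hC'.notMem_between s trivial]
  exact (hC.subset (hmax ⟨u, huN, hcC', hC'⟩ hCC' hvC')).2 rfl

/-- The part `J` of `K` contains `c` but not `w`, is connected, leaves `K` connected and has a
neighbor in `H` outside `K`. -/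
structure IsSide (G : Multigraph V E) (H K : Set V) (w c : V) (J : Set V) : Prop where
  subset : J ⊆ K
  mem : c ∈ J
  notMem : w ∉ J
  linked : G.Linked J
  linked_sdiff : G.Linked (K \ J)
  nonempty_between : (G.between J (H \ K)).Nonempty

theorem exists_isSide [Finite V] (hH : ∀ v ∈ H, G.Linked (H \ {v})) (hKH : K ⊆ H)
    (hne : (H \ K).Nonempty) (hK : G.Linked K) (hw : w ∈ K) (hc : c ∈ K) (hwc : w ≠ c) :
    ∃ J, G.IsSide H K w c J := by
  obtain ⟨C, hcC, hC⟩ := (linkedBy_singleton (G := G) Set.univ c).exists_isComponentIn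
    (S := K \ {w}) (by grind)
  have hCK := hC.subset
  refine ⟨C, by grind, hcC rfl, by grind, hC.linkedBy,
    hC.linkedBy_sdiff hK (linkedBy_singleton _ w) (by grind) ⟨w, rfl⟩, ?_⟩
  obtain ⟨u, hu⟩ := hne
  obtain ⟨x, hx⟩ := (hH w (hKH hw)).nonempty_between (A := C) (by grind) ⟨c, hcC rfl⟩ ⟨u, by grind⟩
  exact ⟨x, by grind [hC.notMem_between x trivial]⟩

theorem IsSide.of_isComponentIn (hJ : G.IsSide H K w c J) (hv : v ∈ J)
    (hvK : v ∈ G.neighbors (K \ J)) (hC : G.IsComponentIn Set.univ (J \ {v}) C) (hc : c ∈ C)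
    (hne : (G.between C (H \ K)).Nonempty) : G.IsSide H K w c C := by
  have hJK := hJ.subset
  have hCJ := hC.subset
  obtain ⟨t, ht⟩ := hvK
  have hunion : K \ C = (K \ J) ∪ (J \ C) := by grind
  refine ⟨by grind, hc, by grind [hJ.notMem], hC.linkedBy, ?_, hne⟩
  rw [hunion]
  exact hJ.linked_sdiff.union (hC.linkedBy_sdiff hJ.linked (linkedBy_singleton _ v) (by grind)
    ⟨v, rfl⟩) (e := t) trivial (by grind)

theorem IsSide.exists_mem_neighbors (hJ : G.IsSide H K w c J) (hH : G.Linked (H \ {c}))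
    (hKH : K ⊆ H) (hne : (H \ K).Nonempty) (hw : w ∈ K) (hcon : G.between (K \ J) (H \ K) = ∅) :
    ∃ v ∈ J, v ≠ c ∧ v ∈ G.neighbors (K \ J) := by
  have hJK := hJ.subset
  have hcJ := hJ.mem
  obtain ⟨u, hu⟩ := hne
  obtain ⟨t, ht⟩ := hH.nonempty_between (A := K \ J) (by grind) ⟨w, hw, hJ.notMem⟩ ⟨u, by grind⟩
  have ht' : t ∉ G.between (K \ J) (H \ K) := by simp [hcon]
  obtain ⟨v, hv, hvt⟩ := exists_mem_between_singleton ht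
  exact ⟨v, by grind, by grind, t, by grind⟩

theorem exists_isSide_nonempty_between_sdiff [Finite V] (hH : ∀ v ∈ H, G.Linked (H \ {v}))
    (hKH : K ⊆ H) (hne : (H \ K).Nonempty) (hK : G.Linked K) (hw : w ∈ K) (hc : c ∈ K)
    (hwc : w ≠ c) : ∃ J, G.IsSide H K w c J ∧ (G.between (K \ J) (H \ K)).Nonempty := by
  obtain ⟨J₀, hJ₀⟩ := exists_isSide hH hKH hne hK hw hc hwc
  obtain ⟨J, -, hJ, hmin⟩ := (Set.toFinite {J | G.IsSide H K w c J}).exists_le_minimal hJ₀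
  refine ⟨J, hJ, ?_⟩
  by_contra hcon
  rw [Set.not_nonempty_iff_eq_empty] at hcon
  obtain ⟨v₀, hv₀, hv₀c, hv₀K⟩ := hJ.exists_mem_neighbors (hH c (hKH hc)) hKH hne hw hcon
  obtain ⟨v, ⟨hvJ, -, hvK⟩, C, hC, hcC, hothers⟩ := hJ.linked.exists_isComponentIn_forall_mem
    hJ.mem (N := {v | v ∈ J ∧ v ≠ c ∧ v ∈ G.neighbors (K \ J)}) (fun v hv => ⟨hv.1, hv.2.1⟩)
    ⟨v₀, hv₀, hv₀c, hv₀K⟩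
  have hJK := hJ.subset
  have hCJ := hC.subset
  have hCrest : G.between C (H \ K) = ∅ := by
    by_contra! hCne
    exact (hCJ (hmin (hJ.of_isComponentIn hvJ hvK hC hcC hCne) (by grind) hvJ)).2 rfl
  obtain ⟨u, hu⟩ := hne
  obtain ⟨t, ht⟩ := (hH v (hKH (hJK hvJ))).nonempty_between (A := (K \ J) ∪ C) (by grind)
    ⟨c, Or.inr hcC⟩ ⟨u, by grind⟩
  have htC := hC.notMem_between t trivial
  have htCH : t ∉ G.between C (H \ K) := by simp [hCrest]
  have htJH : t ∉ G.between (K \ J) (H \ K) := by simp [hcon]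
  have hC_of_mem : ∀ x ∈ J, x ≠ v → t ∈ G.between {x} (K \ J) → x ∈ C := fun x hx hxv hxt => by
    by_cases hxc : x = c
    · exact hxc ▸ hcC
    · exact hothers x ⟨hx, hxc, t, hxt⟩ hxv
  have hsrc := hC_of_mem (G.src t)
  have htgt := hC_of_mem (G.tgt t)
  grind

end

/-! ### Frontiers -/

section

variable {V E : Type} {G : Multigraph V E} {r : V} {B R : Set E} {H Y Q D : Set V} {b e f g t x : E}

/-- The state of the construction: `H` is the part of the graph still to be treated, and `Y` is the
treated part, so all boundary edges of `H` except `e` lead to `Y`. At the start `Y` is empty and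
`H` has exactly three boundary edges. -/
structure IsFrontier (G : Multigraph V E) (r : V) (H Y : Set V) (e : E) : Prop where
  nonempty : H.Nonempty
  linked : G.Linked H
  linked_compl : G.Linked Hᶜ
  linked_done : G.Linked Y
  disjoint : Disjoint H Y
  root_notMem : r ∉ H
  root_notMem_done : r ∉ Y
  mem_cutEdges : e ∈ G.cutEdges H
  boundary : (Y = ∅ ∧ (G.cutEdges H).ncard = 3) ∨
    ∀ t ∈ G.cutEdges H, t ≠ e → t ∈ G.between H Y

/-- A strip of `H` which can be moved to the treated part `Y`, after which `x` is the only boundary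
edge that may fail to lead to the treated part. -/
structure IsAdmissibleStrip (G : Multigraph V E) (H Y : Set V) (e : E) (Q : Set V) (f g x : E) :
    Prop extends G.IsStrip H Q f g where
  exit_mem : x ∈ G.cutEdges H
  not_meets_exit : ¬ G.Meets x Q
  boundary : (Y = ∅ ∧ G.cutEdges H ⊆ {f, g, x}) ∨
    (x = e ∧ ∀ t ∈ G.cutEdges H, t ≠ e → t ∈ G.between H Y)

namespace IsFrontier

theorem linked_compl_sdiff (hF : G.IsFrontier r H Y e) (hD : D ⊆ H) (hDl : G.Linked D)
    (ht : t ∈ G.cutEdges H) (htD : G.Meets t D) : G.Linked (H \ D)ᶜ := by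
  have hcompl : (H \ D)ᶜ = Hᶜ ∪ D := by grind
  rw [hcompl]
  exact hF.linked_compl.union hDl (e := t) trivial (by grind)

theorem sdiff_strip (hF : G.IsFrontier r H Y e) (h : G.IsAdmissibleStrip H Y e Q f g x) :
    G.IsFrontier r (H \ Q) (Y ∪ Q) x where
  nonempty := h.rest_nonempty
  linked := h.linked_rest
  linked_compl := hF.linked_compl_sdiff h.subset h.linked h.left_mem h.meets_left
  linked_done := by
    rcases h.boundary with ⟨rfl, -⟩ | ⟨rfl, hb⟩
    · rw [Set.empty_union]
      exact h.linked
    · have := hb f h.left_mem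
      exact hF.linked_done.union h.linked (e := f) trivial
        (by grind [h.subset, h.meets_left, h.not_meets_exit, hF.disjoint])
  disjoint := by grind [hF.disjoint]
  root_notMem := by grind [hF.root_notMem]
  root_notMem_done := by grind [hF.root_notMem, hF.root_notMem_done, h.subset]
  mem_cutEdges := by grind [h.exit_mem, h.not_meets_exit]
  boundary := by
    refine Or.inr fun t ht htx => ?_
    have : Q ⊆ H := h.subset
    by_cases htQ : G.Meets t Q
    · grind
    · rcases h.boundary with ⟨rfl, hthree⟩ | ⟨rfl, hb⟩
      · have := @hthree t
        grind [h.meets_left, h.meets_right]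
      · have := hb t
        grind

theorem inside_union_subset [Finite E] (hG : G.IsCubicThreeEdgeConnected)
    (hF : G.IsFrontier r H Y e) (h : G.IsAdmissibleStrip H Y e Q f g x)
    (hR : G.ClosedAvoiding r R) (hYR : G.inside Y ⊆ R) (hQR : G.inside Q ⊆ R) :
    G.inside (Y ∪ Q) ⊆ R := by
  rcases h.boundary with ⟨rfl, -⟩ | ⟨rfl, hb⟩
  · rwa [Set.empty_union]
  have hQH := h.subset
  have hYQ : Disjoint Y Q := (hF.disjoint.mono_left hQH).symm
  have hbetween : ∀ t ∈ G.cutEdges H, G.Meets t Q → t ∈ G.between Y Q := fun t ht htQ => by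
    have := hb t ht (by grind [h.not_meets_exit])
    grind [hF.disjoint]
  have hf := hbetween f h.left_mem h.meets_left
  have hg := hbetween g h.right_mem h.meets_right
  have hrQ : r ∉ Q := fun hr => hF.root_notMem (hQH hr)
  have hmem : ∀ {s t}, s ∈ G.between Y Q → t ∈ G.between Y Q → s ≠ t → s ∈ R :=
    hR.mem_of_mem_between hG hF.root_notMem_done hrQ hF.linked_done h.linked hYQ hYR hQR
  intro t ht
  by_cases htb : t ∈ G.between Y Q
  · by_cases htf : t = f
    · exact hmem htb hg (htf ▸ h.ne.symm)
    · exact hmem htb hf htf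
  · grind

theorem isPartialBase_union [Finite V] [Finite E] (hG : G.IsCubicThreeEdgeConnected)
    (hF : G.IsFrontier r H Y e) (h : G.IsAdmissibleStrip H Y e Q f g x)
    (hB : G.IsPartialBase r (H \ Q) (Y ∪ Q) x B) : G.IsPartialBase r H Y e (B ∪ G.inside Q) := by
  refine h.isPartialBase (fun R hR => hF.inside_union_subset hG h hR) (fun hx => ?_) hB
  rcases h.boundary with ⟨rfl, -⟩ | ⟨rfl, -⟩
  · grind [h.exit_mem]
  · rfl

end IsFrontier

theorem Linked.of_subsingleton_between (hH : G.Linked H) (hD : D ⊆ H) (hne : (H \ D).Nonempty)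
    (hb : (G.between D (H \ D)).Subsingleton) : G.Linked D := by
  intro A hA hAne hDA
  by_contra! hcon
  obtain ⟨u, hu⟩ := hne
  obtain ⟨s, hs⟩ := hH.nonempty_between (hA.trans hD) hAne ⟨u, by grind⟩
  obtain ⟨t, ht⟩ := hH.nonempty_between (A := D \ A) (by grind) hDA ⟨u, by grind⟩
  have hsA := hcon s trivial
  have htA := hcon t trivial
  have := hb (x := s) (by grind) (y := t) (by grind)
  grind

theorem Linked.sdiff_of_subsingleton_between (hH : G.Linked H) (hD : D ⊆ H) (hne : D.Nonempty)
    (hb : (G.between D (H \ D)).Subsingleton) : G.Linked (H \ D) := by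
  have hHD : H \ (H \ D) = D := Set.sdiff_sdiff_cancel_left hD
  exact hH.of_subsingleton_between Set.sdiff_subset (by rwa [hHD]) (by rwa [hHD, between_comm])

namespace IsFrontier

theorem exists_mem_between_done (hG : G.IsCubicThreeEdgeConnected) (hF : G.IsFrontier r H Y e)
    (hbd : ∀ t ∈ G.cutEdges H, t ≠ e → t ∈ G.between H Y) (hD : D ⊆ H) (hne : D.Nonempty)
    (hne' : (H \ D).Nonempty) (hb : G.between D (H \ D) = {b}) (heD : ¬ G.Meets e D) :
    ∃ s ∈ G.cutEdges H, s ∈ G.between D Y := by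
  obtain ⟨s, hs, hsb⟩ := Set.not_subset.1 (hG.not_cutEdges_subset_pair hne
    (hne'.mono (by grind)) b b)
  have hsD : s ∉ G.between D (H \ D) := by grind
  have := hbd s
  exact ⟨s, by grind, by grind [hF.disjoint]⟩

theorem of_bridge (hF : G.IsFrontier r H Y e)
    (hbd : ∀ t ∈ G.cutEdges H, t ≠ e → t ∈ G.between H Y) (hD : D ⊆ H) (hne : D.Nonempty)
    (hne' : (H \ D).Nonempty) (hb : G.between D (H \ D) = {b}) (heD : ¬ G.Meets e D) :
    G.IsFrontier r D Y b where
  nonempty := hne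
  linked := hF.linked.of_subsingleton_between hD hne' (by simp [hb])
  linked_compl := by
    have hHD : H \ (H \ D) = D := Set.sdiff_sdiff_cancel_left hD
    exact hHD ▸ hF.linked_compl_sdiff (D := H \ D) Set.sdiff_subset
      (hF.linked.sdiff_of_subsingleton_between hD hne (by simp [hb])) hF.mem_cutEdges
      (by grind [hF.mem_cutEdges])
  linked_done := hF.linked_done
  disjoint := hF.disjoint.mono_left hD
  root_notMem hr := hF.root_notMem (hD hr)
  root_notMem_done := hF.root_notMem_done
  mem_cutEdges := by
    have : b ∈ G.between D (H \ D) := by rw [hb]; rfl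
    grind
  boundary := by
    refine Or.inr fun t ht htb => ?_
    have htD : t ∉ G.between D (H \ D) := by grind
    have := hbd t
    grind [hF.disjoint]

theorem sdiff_of_bridge (hG : G.IsCubicThreeEdgeConnected) (hF : G.IsFrontier r H Y e)
    (hbd : ∀ t ∈ G.cutEdges H, t ≠ e → t ∈ G.between H Y) (hD : D ⊆ H) (hne : D.Nonempty)
    (hne' : (H \ D).Nonempty) (hb : G.between D (H \ D) = {b}) (heD : ¬ G.Meets e D) :
    G.IsFrontier r (H \ D) (Y ∪ D) e := by
  obtain ⟨s, hs, hsD⟩ := hF.exists_mem_between_done hG hbd hD hne hne' hb heD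
  have hDl : G.Linked D := hF.linked.of_subsingleton_between hD hne' (by simp [hb])
  exact
    { nonempty := hne'
      linked := hF.linked.sdiff_of_subsingleton_between hD hne (by simp [hb])
      linked_compl := hF.linked_compl_sdiff hD hDl hs (by grind)
      linked_done := hF.linked_done.union hDl trivial (between_comm D Y ▸ hsD)
      disjoint := by grind [hF.disjoint]
      root_notMem := by grind [hF.root_notMem]
      root_notMem_done := by grind [hF.root_notMem, hF.root_notMem_done]
      mem_cutEdges := by grind [hF.mem_cutEdges]
      boundary := Or.inr fun t ht hte => by
        have := hbd t
        grind }

end IsFrontier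

end

/-! ### Counting partial bases -/

section

variable {V E : Type} {G : Multigraph V E} {r : V} {A A' D D' H Y Y' Q Q' J : Set V}
  {B B' : Set E} {b c e e' f f' g g' x x' : E} {u w : V} {d : ℕ}

/-- The number of partial bases of `G[H]` is at least `2 ^ k` for some `k` such that `k * d` is at
least the number `|E(G[H])| - |H| + 1` of edges in each of them. -/
def ManyBases (G : Multigraph V E) (r : V) (d : ℕ) (H Y : Set V) (e : E) : Prop :=
  ∃ k, 2 ^ k ≤ {B | G.IsPartialBase r H Y e B}.ncard ∧
    (G.inside H).ncard + 1 ≤ H.ncard + k * d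

theorem ManyBases.mono [Finite E] (h : G.ManyBases r d H Y e)
    (hsub : ∀ B, G.IsPartialBase r H Y e B → G.IsPartialBase r H Y' e' B) :
    G.ManyBases r d H Y' e' := by
  obtain ⟨k, hk, hkd⟩ := h
  exact ⟨k, hk.trans (Set.ncard_le_ncard hsub), hkd⟩

theorem manyBases_singleton [Finite E] (hl : G.Loopless) (d : ℕ) (w : V) :
    G.ManyBases r d {w} ∅ e := by
  have hin : G.inside {w} = ∅ := by
    ext t
    have := hl t
    grind
  refine ⟨0, ?_, by simp [hin]⟩
  exact (Set.ncard_pos).2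
    ⟨∅, by simp, linkedBy_singleton _ w, by simp [hin], fun R _ _ _ => by simp [hin]⟩

theorem ManyBases.union_of_bridge [Finite V] [Finite E] (h : G.ManyBases r d D Y b)
    (h' : G.ManyBases r d D' (Y ∪ D) e) (hDD' : Disjoint D D') (hD'Y : Disjoint D' Y)
    (hb : G.between D D' = {b}) : G.ManyBases r d (D ∪ D') Y e := by
  obtain ⟨k, hk, hkd⟩ := h
  obtain ⟨k', hk', hkd'⟩ := h'
  refine ⟨k + k', ?_, ?_⟩
  · rw [pow_add]
    refine (Nat.mul_le_mul hk hk').trans ?_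
    rw [← Set.ncard_prod]
    refine Set.ncard_le_ncard_of_injOn (fun p => p.1 ∪ p.2)
      (fun p hp => hp.1.union_of_bridge hp.2 hDD' hD'Y hb) ?_
    rintro ⟨B, B'⟩ ⟨hB, hB'⟩ ⟨C, C'⟩ ⟨hC, hC'⟩ heq
    have hmem : ∀ x, x ∈ B ∪ B' ↔ x ∈ C ∪ C' := Set.ext_iff.1 heq
    have hB : B ⊆ G.inside D := hB.subset
    have hB' : B' ⊆ G.inside D' := hB'.subset
    have hC : C ⊆ G.inside D := hC.subset
    have hC' : C' ⊆ G.inside D' := hC'.subset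
    refine Prod.ext (Set.ext fun x => ?_) (Set.ext fun x => ?_) <;> grind [hmem x]
  · have hin : G.inside (D ∪ D') = insert b (G.inside D ∪ G.inside D') := by
      ext x
      have := Set.ext_iff.1 hb x
      grind
    have hinsert := Set.ncard_insert_le b (G.inside D ∪ G.inside D')
    have hunion := Set.ncard_union_le (G.inside D) (G.inside D')
    rw [hin, Set.ncard_union_eq hDD', add_mul]
    omega

theorem injOn_union_inside (H A : Set V) :
    Set.InjOn (· ∪ G.inside A) {B | B ⊆ G.inside (H \ A)} := by
  intro B hB C hC heq
  have hmem := Set.ext_iff.1 heq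
  have hB : B ⊆ G.inside (H \ A) := hB
  have hC : C ⊆ G.inside (H \ A) := hC
  ext x
  have := hmem x
  grind

theorem union_inside_ne (hA' : G.Linked A') (hinter : (A ∩ A').Nonempty) (hsub : ¬ A' ⊆ A)
    (hB : B ⊆ G.inside (H \ A)) : B ∪ G.inside A ≠ B' ∪ G.inside A' := by
  intro heq
  obtain ⟨v, hv, hvA⟩ := Set.not_subset.1 hsub
  obtain ⟨t, ht⟩ := hA'.nonempty_between (A := A ∩ A') (by grind) hinter ⟨v, by grind⟩
  have := Set.ext_iff.1 heq t
  grind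

theorem disjoint_image_union_inside (hA : G.Linked A) (hA' : G.Linked A')
    (hinter : (A ∩ A').Nonempty) (hne : A ≠ A') :
    Disjoint ((· ∪ G.inside A) '' {B | B ⊆ G.inside (H \ A)})
      ((· ∪ G.inside A') '' {B | B ⊆ G.inside (H \ A')}) := by
  rw [Set.disjoint_left]
  rintro _ ⟨B, hB, rfl⟩ ⟨B', hB', heq⟩
  by_cases hsub : A' ⊆ A
  · exact union_inside_ne hA (Set.inter_comm A A' ▸ hinter) (fun h => hne (h.antisymm hsub)) hB' heq
  · exact union_inside_ne hA' hinter hsub hB heq.symm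

theorem IsFrontier.manyBases_of_isAdmissibleStrip_pair [Finite V] [Finite E]
    (hG : G.IsCubicThreeEdgeConnected) (hF : G.IsFrontier r H Y e)
    (h : G.IsAdmissibleStrip H Y e Q f g x) (h' : G.IsAdmissibleStrip H Y e Q' f' g' x')
    (hd : (G.inside Q).ncard ≤ d) (hd' : (G.inside Q').ncard ≤ d) (hinter : (Q ∩ Q').Nonempty)
    (hne : Q ≠ Q') (hm : G.ManyBases r d (H \ Q) (Y ∪ Q) x)
    (hm' : G.ManyBases r d (H \ Q') (Y ∪ Q') x') : G.ManyBases r d H Y e := by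
  obtain ⟨k, hk, hkd⟩ := hm
  obtain ⟨k', hk', hkd'⟩ := hm'
  refine ⟨min k k' + 1, ?_, ?_⟩
  · set S := {B | G.IsPartialBase r (H \ Q) (Y ∪ Q) x B}
    set S' := {B | G.IsPartialBase r (H \ Q') (Y ∪ Q') x' B}
    have hS : S ⊆ {B | B ⊆ G.inside (H \ Q)} := fun B hB => hB.subset
    have hS' : S' ⊆ {B | B ⊆ G.inside (H \ Q')} := fun B hB => hB.subset
    have hsubset : (· ∪ G.inside Q) '' S ∪ (· ∪ G.inside Q') '' S' ⊆
        {B | G.IsPartialBase r H Y e B} := by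
      rintro _ (⟨B, hB, rfl⟩ | ⟨B, hB, rfl⟩)
      exacts [hF.isPartialBase_union hG h hB, hF.isPartialBase_union hG h' hB]
    calc 2 ^ (min k k' + 1) = 2 ^ min k k' + 2 ^ min k k' := by ring
      _ ≤ 2 ^ k + 2 ^ k' := by gcongr <;> simp
      _ ≤ S.ncard + S'.ncard := add_le_add hk hk'
      _ = ((· ∪ G.inside Q) '' S ∪ (· ∪ G.inside Q') '' S').ncard := by
        rw [Set.ncard_union_eq ((disjoint_image_union_inside h.linked h'.linked hinter hne).mono
          (Set.image_mono hS) (Set.image_mono hS')), ((injOn_union_inside H Q).mono hS).ncard_image,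
          ((injOn_union_inside H Q').mono hS').ncard_image]
      _ ≤ _ := Set.ncard_le_ncard hsubset
  · have hin := h.ncard_inside
    have hin' := h'.ncard_inside
    have hcard := Set.ncard_sdiff_add_ncard_of_subset h.subset
    have hcard' := Set.ncard_sdiff_add_ncard_of_subset h'.subset
    rcases min_choice k k' with hmin | hmin <;> rw [hmin, add_mul] <;> omega

/-! ### Finding two strips -/

theorem exists_mem_cutEdges_ne (h : 4 ≤ (G.cutEdges H).ncard) (a b c : E) :
    ∃ t ∈ G.cutEdges H, t ≠ a ∧ t ≠ b ∧ t ≠ c := by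
  have hcard : ({a, b, c} : Set E).ncard ≤ 3 := by
    have := Set.ncard_insert_le a {b, c}
    have := Set.ncard_insert_le b {c}
    rw [Set.ncard_singleton] at this
    omega
  obtain ⟨t, ht, hne⟩ := Set.exists_mem_notMem_of_ncard_lt_ncard (hcard.trans_lt h)
  exact ⟨t, ht, by grind⟩

theorem nontrivial_of_four_le_ncard_cutEdges [Finite E] (hG : G.Cubic) (hl : G.Loopless)
    (hne : H.Nonempty) (h : 4 ≤ (G.cutEdges H).ncard) : H.Nontrivial := by
  rcases hne.exists_eq_singleton_or_nontrivial with ⟨w, rfl⟩ | hnt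
  · have hsub : G.cutEdges {w} ⊆ G.incidentEdges w := by grind
    have := Set.ncard_le_ncard hsub
    rw [hG.ncard_incidentEdges hl] at this
    omega
  · exact hnt

theorem two_le_ncard_meets [Finite E] (hG : G.IsCubicThreeEdgeConnected) (hA : A ⊆ H)
    (hne : A.Nonempty) (hne' : (H \ A).Nonempty) (hb : (G.between A (H \ A)).Subsingleton) :
    2 ≤ {t ∈ G.cutEdges H | G.Meets t A}.ncard := by
  have hle := hG.edgeConnected.le_ncard_cutEdges hne (hne'.mono (by grind))
  have hsub : G.cutEdges A ⊆ G.between A (H \ A) ∪ {t ∈ G.cutEdges H | G.Meets t A} := by grind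
  have := (Set.ncard_le_ncard hsub).trans (Set.ncard_union_le _ _)
  have := (Set.ncard_le_one_iff_subsingleton).2 hb
  omega

theorem bridgeless_of_ncard_cutEdges_eq_three [Finite E] (hG : G.IsCubicThreeEdgeConnected)
    (h : (G.cutEdges H).ncard = 3) : G.Bridgeless H := by
  intro D hD hne hne'
  by_contra hb
  rw [Set.not_nontrivial_iff] at hb
  have hHD : H \ (H \ D) = D := Set.sdiff_sdiff_cancel_left hD
  have hleft := two_le_ncard_meets hG hD hne hne' hb
  have hright := two_le_ncard_meets hG (A := H \ D) Set.sdiff_subset hne' (by rwa [hHD])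
    (by rwa [hHD, between_comm])
  have hdis : Disjoint {t ∈ G.cutEdges H | G.Meets t D}
      {t ∈ G.cutEdges H | G.Meets t (H \ D)} := by grind
  have hle : _ ≤ (G.cutEdges H).ncard := Set.ncard_le_ncard (Set.union_subset
    (Set.sep_subset _ (G.Meets · D)) (Set.sep_subset _ (G.Meets · (H \ D))))
  rw [Set.ncard_union_eq hdis] at hle
  omega

theorem IsStrip.ne_of_disjoint (h : G.IsStrip H Q f g) (hA : A ⊆ H \ Q) (hA' : A' ⊆ H \ Q)
    (hAA' : Disjoint A A') {s p : V} (hs : s ∈ Q) (hx : x ∈ G.between {s} A)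
    (hx' : x' ∈ G.between {p} A') : s ≠ p := by
  rintro rfl
  have := (h.existsUnique s hs).unique (y₁ := x) (y₂ := x') (by grind) (by grind)
  grind

theorem IsStrip.exists_meets_of_linked_sdiff (h : G.IsStrip H Q f g) (hA : A ⊆ Q)
    (hne : A.Nonempty) (hlink : G.Linked (Q \ A)) :
    ∃ t ∈ G.cutEdges H, G.Meets t Q ∧ G.Meets t A := by
  by_contra! hcon
  have hf := hcon f h.left_mem h.meets_left
  have hg := hcon g h.right_mem h.meets_right
  obtain ⟨v, hv⟩ := hne
  have := h.minimal (Q \ A) Set.sdiff_subset hlink (by grind [h.meets_left])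
    (by grind [h.meets_right])
  grind

theorem Bridgeless.exists_isStrip_of_isSide [Finite V] [Finite E] (h : G.Bridgeless H)
    (hG : G.IsCubicThreeEdgeConnected) (hQ : G.IsStrip H Q f g)
    (hJ : G.IsSide H (H \ Q) w u J) (hne : (G.between ((H \ Q) \ J) Q).Nonempty)
    (hw : w ∈ H \ Q) (hc : c ∈ G.cutEdges H) (hcu : c ∈ G.incidentEdges u) :
    ∃ Q' f' g', G.IsStrip H Q' f' g' ∧ G.Meets f' Q ∧ w ∉ Q' ∧ Q' ≠ Q := by
  have hQH := hQ.subset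
  have hJQ := hJ.subset
  have hHQ : H \ (H \ Q) = Q := Set.sdiff_sdiff_cancel_left hQH
  obtain ⟨x, hx⟩ := hHQ ▸ hJ.nonempty_between
  obtain ⟨y, hy⟩ := hne
  obtain ⟨s, hsQ, hs⟩ := exists_mem_between_singleton hx
  obtain ⟨p, hpQ, hp⟩ := exists_mem_between_singleton hy
  rw [between_comm] at hs hp
  have hsp : s ≠ p := hQ.ne_of_disjoint hJQ Set.sdiff_subset Set.disjoint_sdiff_right hsQ hs hp
  obtain ⟨Z, hZ⟩ := hQ.linked.exists_isFarSide (linkedBy_singleton Set.univ s) (by grind) hpQ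
  have hZQ := hZ.subset
  have hsZ : s ∉ Z := by grind [hZ.disjoint]
  obtain ⟨f', hf', hf'Q, hf'Z⟩ := hQ.exists_meets_of_linked_sdiff (A := Q \ Z) Set.sdiff_subset
    ⟨s, hsQ, hsZ⟩ (by rw [Set.sdiff_sdiff_cancel_left hZQ]; exact hZ.linked)
  have hpZ := hZ.mem
  have huJ := hJ.mem
  obtain ⟨Q', g', hQ', hKQ'⟩ := h.exists_isStrip_of_carries hG (K := insert p ((H \ Q) \ J))
    (M := J ∪ (Q \ Z)) (hJ.linked_sdiff.insert_of_mem_between trivial hp) ⟨p, Or.inl rfl⟩ (by grind)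
    (by grind) hf' ⟨hJ.linked.union hZ.linked_sdiff (e := x) trivial (by grind),
      hf'Z.mono Set.subset_union_right, c, hc, by grind, by grind⟩
  have hpQ' : p ∉ Q' := (hKQ' (Or.inl rfl)).2
  exact ⟨Q', f', g', hQ', hf'Q, (hKQ' (Or.inr ⟨hw, hJ.notMem⟩)).2, fun heq => hpQ' (heq ▸ hpQ)⟩

theorem Bridgeless.exists_isStrip_of_notMem [Finite V] [Finite E] (h : G.Bridgeless H)
    (hG : G.IsCubicThreeEdgeConnected) (hQ : G.IsStrip H Q f g) (hc : c ∈ G.cutEdges H)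
    (he : e ∈ G.cutEdges H) (hce : c ≠ e) (hcQ : ¬ G.Meets c Q) (heQ : ¬ G.Meets e Q) :
    ∃ Q' f' g', G.IsStrip H Q' f' g' ∧ G.Meets f' Q ∧ ¬ G.Meets e Q' ∧ Q' ≠ Q := by
  have hQH := hQ.subset
  have hHQ : H \ (H \ Q) = Q := Set.sdiff_sdiff_cancel_left hQH
  obtain ⟨v, hvQ, -⟩ := hQ.meets_left.exists_mem_incidentEdges
  obtain ⟨w, hwH, hew⟩ := exists_mem_incidentEdges_of_mem_cutEdges he
  obtain ⟨u, huH, hcu⟩ := exists_mem_incidentEdges_of_mem_cutEdges hc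
  have hwQ : w ∉ Q := by grind
  have huQ : u ∉ Q := by grind
  have hwu : w ≠ u := by
    rintro rfl
    exact hce (h.eq_of_mem_cutEdges hG.cubic hG.loopless hwH ⟨v, by grind⟩ hc he hcu hew)
  obtain ⟨J, hJ, hne⟩ := exists_isSide_nonempty_between_sdiff
    (fun v hv => h.linked_sdiff_singleton hG.cubic hG.loopless hv) Set.sdiff_subset
    (hHQ.symm ▸ ⟨v, hvQ⟩) hQ.linked_rest ⟨hwH, hwQ⟩ ⟨huH, huQ⟩ hwu
  rw [hHQ] at hne
  obtain ⟨Q', f', g', hQ', hf'Q, hwQ', hne'⟩ :=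
    h.exists_isStrip_of_isSide hG hQ hJ hne ⟨hwH, hwQ⟩ hc hcu
  exact ⟨Q', f', g', hQ', hf'Q, by grind [hQ'.subset], hne'⟩

end

/-! ### Many partial bases of a frontier -/

section

variable {V E : Type} {G : Multigraph V E} {r : V} {D H Y Q Q' : Set V}
  {e f f' g g' x x' : E} {d : ℕ}

namespace IsFrontier

theorem manyBases_of_bridge [Finite V] [Finite E] (hG : G.IsCubicThreeEdgeConnected)
    (hF : G.IsFrontier r H Y e)
    (ih : ∀ H' Y' e', H'.ncard < H.ncard → G.IsFrontier r H' Y' e' → G.ManyBases r d H' Y' e')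
    (hbd : ∀ t ∈ G.cutEdges H, t ≠ e → t ∈ G.between H Y) (hD : D ⊆ H) (hne : D.Nonempty)
    (hne' : (H \ D).Nonempty) (hsub : (G.between D (H \ D)).Subsingleton) (heD : ¬ G.Meets e D) :
    G.ManyBases r d H Y e := by
  obtain ⟨b, hb⟩ := Set.exists_eq_singleton_iff_nonempty_subsingleton.2
    ⟨hF.linked.nonempty_between hD hne hne', hsub⟩
  have hcard := Set.ncard_sdiff_add_ncard_of_subset hD
  have hpos := (Set.ncard_pos).2 hne
  have hpos' := (Set.ncard_pos).2 hne'
  have := (ih _ _ _ (by omega) (hF.of_bridge hbd hD hne hne' hb heD)).union_of_bridge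
    (ih _ _ _ (by omega) (hF.sdiff_of_bridge hG hbd hD hne hne' hb heD)) Set.disjoint_sdiff_right
    (hF.disjoint.mono_left Set.sdiff_subset) hb
  rwa [Set.union_sdiff_cancel hD] at this

theorem manyBases_of_not_bridgeless [Finite V] [Finite E] (hG : G.IsCubicThreeEdgeConnected)
    (hF : G.IsFrontier r H Y e)
    (ih : ∀ H' Y' e', H'.ncard < H.ncard → G.IsFrontier r H' Y' e' → G.ManyBases r d H' Y' e')
    (hbd : ∀ t ∈ G.cutEdges H, t ≠ e → t ∈ G.between H Y) (hH : ¬ G.Bridgeless H) :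
    G.ManyBases r d H Y e := by
  unfold Bridgeless at hH
  push Not at hH
  obtain ⟨D, hD, hne, hne', hsub⟩ := hH
  by_cases heD : G.Meets e D
  · have hHD : H \ (H \ D) = D := Set.sdiff_sdiff_cancel_left hD
    exact hF.manyBases_of_bridge hG ih hbd (D := H \ D) Set.sdiff_subset hne' (by rwa [hHD])
      (by rwa [hHD, between_comm])
      (heD.not_meets_of_disjoint hF.mem_cutEdges hD Set.sdiff_subset Set.disjoint_sdiff_right)
  · exact hF.manyBases_of_bridge hG ih hbd hD hne hne' hsub heD

theorem manyBases_of_two_strips [Finite V] [Finite E] (hG : G.IsCubicThreeEdgeConnected)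
    (hd : ∀ C, G.IsCycle C → G.Peripheral C → C.ncard ≤ d + 1) (hF : G.IsFrontier r H Y e)
    (ih : ∀ H' Y' e', H'.ncard < H.ncard → G.IsFrontier r H' Y' e' → G.ManyBases r d H' Y' e')
    (h : G.IsAdmissibleStrip H Y e Q f g x) (h' : G.IsAdmissibleStrip H Y e Q' f' g' x')
    (hf'Q : G.Meets f' Q) (hne : Q ≠ Q') : G.ManyBases r d H Y e := by
  have hinter : (Q ∩ Q').Nonempty := by
    rw [← Set.not_disjoint_iff_nonempty_inter]
    exact fun hdis => hf'Q.not_meets_of_disjoint h'.left_mem h.subset h'.subset hdis h'.meets_left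
  have hlt : ∀ A ⊆ H, (Q ∩ Q') ⊆ A → (H \ A).ncard < H.ncard := fun A hA hsub =>
    Set.ncard_lt_ncard (Set.sdiff_ssubset_left_iff.2 (by
      rw [Set.inter_eq_right.2 hA]; exact hinter.mono hsub))
  exact hF.manyBases_of_isAdmissibleStrip_pair hG h h'
    (Nat.le_of_lt_succ (h.ncard_inside_lt hG hF.linked_compl hd))
    (Nat.le_of_lt_succ (h'.ncard_inside_lt hG hF.linked_compl hd)) hinter hne
    (ih _ _ _ (hlt _ h.subset Set.inter_subset_left) (hF.sdiff_strip h))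
    (ih _ _ _ (hlt _ h'.subset Set.inter_subset_right) (hF.sdiff_strip h'))

theorem manyBases_of_ncard_eq_three [Finite V] [Finite E] (hG : G.IsCubicThreeEdgeConnected)
    (hd : ∀ C, G.IsCycle C → G.Peripheral C → C.ncard ≤ d + 1) (hF : G.IsFrontier r H ∅ e)
    (ih : ∀ H' Y' e', H'.ncard < H.ncard → G.IsFrontier r H' Y' e' → G.ManyBases r d H' Y' e')
    (hthree : (G.cutEdges H).ncard = 3) : G.ManyBases r d H ∅ e := by
  rcases hF.nonempty.exists_eq_singleton_or_nontrivial with ⟨w, rfl⟩ | hnt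
  · exact manyBases_singleton hG.loopless d w
  have hH := bridgeless_of_ncard_cutEdges_eq_three hG hthree
  have he := hF.mem_cutEdges
  obtain ⟨a, b, hab, hcut⟩ := Set.ncard_eq_two.1
    ((Set.ncard_sdiff_singleton_of_mem he).trans (by rw [hthree]))
  have hmem : ∀ t, t ∈ G.cutEdges H ∧ t ≠ e ↔ t = a ∨ t = b := Set.ext_iff.1 hcut
  obtain ⟨ha, hae⟩ := (hmem a).2 (Or.inl rfl)
  obtain ⟨hb, hbe⟩ := (hmem b).2 (Or.inr rfl)
  obtain ⟨Q, g, hQ, heQ⟩ := hH.exists_isStrip hG hnt hb ha he hab.symm hbe hae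
  obtain ⟨Q', g', hQ', haQ'⟩ := hH.exists_isStrip hG hnt hb he ha hbe hab.symm hae.symm
  have hg : g = a := by grind [hQ.right_mem, hQ.meets_right, hQ.ne]
  have hg' : g' = e := by grind [hQ'.right_mem, hQ'.meets_right, hQ'.ne]
  subst hg hg'
  have hcutQ : G.cutEdges H ⊆ {b, g, g'} := by grind
  have hcutQ' : G.cutEdges H ⊆ {b, g', g} := by grind
  exact hF.manyBases_of_two_strips hG hd ih ⟨hQ, he, heQ, Or.inl ⟨rfl, hcutQ⟩⟩
    ⟨hQ', ha, haQ', Or.inl ⟨rfl, hcutQ'⟩⟩ hQ.meets_left fun heq => heQ (heq ▸ hQ'.meets_right)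

theorem manyBases_of_bridgeless [Finite V] [Finite E] (hG : G.IsCubicThreeEdgeConnected)
    (hd : ∀ C, G.IsCycle C → G.Peripheral C → C.ncard ≤ d + 1) (hF : G.IsFrontier r H Y e)
    (ih : ∀ H' Y' e', H'.ncard < H.ncard → G.IsFrontier r H' Y' e' → G.ManyBases r d H' Y' e')
    (hfour : 4 ≤ (G.cutEdges H).ncard)
    (hbd : ∀ t ∈ G.cutEdges H, t ≠ e → t ∈ G.between H Y) (hH : G.Bridgeless H) :
    G.ManyBases r d H Y e := by
  have hnt := nontrivial_of_four_le_ncard_cutEdges hG.cubic hG.loopless hF.nonempty hfour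
  have he := hF.mem_cutEdges
  obtain ⟨a, ha, hae, -⟩ := exists_mem_cutEdges_ne hfour e e e
  obtain ⟨b, hb, hbe, hba, -⟩ := exists_mem_cutEdges_ne hfour e a a
  obtain ⟨Q, g, hQ, heQ⟩ := hH.exists_isStrip hG hnt ha hb he hba.symm hae hbe
  obtain ⟨c, hc, hce, hca, hcg⟩ := exists_mem_cutEdges_ne hfour e a g
  have hcQ : ¬ G.Meets c Q := fun h => (hQ.eq_or_eq c hc h).elim hca hcg
  obtain ⟨Q', f', g', hQ', hf'Q, heQ', hne⟩ := hH.exists_isStrip_of_notMem hG hQ hc he hce hcQ heQ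
  exact hF.manyBases_of_two_strips hG hd ih ⟨hQ, he, heQ, Or.inr ⟨rfl, hbd⟩⟩
    ⟨hQ', he, heQ', Or.inr ⟨rfl, hbd⟩⟩ hf'Q hne.symm

theorem manyBases [Finite V] [Finite E] (hG : G.IsCubicThreeEdgeConnected)
    (hd : ∀ C, G.IsCycle C → G.Peripheral C → C.ncard ≤ d + 1) (hF : G.IsFrontier r H Y e) :
    G.ManyBases r d H Y e := by
  induction hn : H.ncard using Nat.strong_induction_on generalizing H Y e with
  | _ n IH =>
    subst hn
    have ih : ∀ H' Y' e', H'.ncard < H.ncard → G.IsFrontier r H' Y' e' →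
        G.ManyBases r d H' Y' e' := fun H' Y' e' hlt hF' => IH _ hlt hF' rfl
    rcases hF.boundary with ⟨rfl, hthree⟩ | hbd
    · exact hF.manyBases_of_ncard_eq_three hG hd ih hthree
    have hle := hG.edgeConnected.le_ncard_cutEdges hF.nonempty ⟨r, hF.root_notMem⟩
    by_cases hthree : (G.cutEdges H).ncard = 3
    · have hF₀ : G.IsFrontier r H ∅ e :=
        { hF with
          linked_done := linkedBy_empty _
          disjoint := Set.disjoint_empty H
          root_notMem_done := Set.notMem_empty r
          boundary := Or.inl ⟨rfl, hthree⟩ }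
      exact (hF₀.manyBases_of_ncard_eq_three hG hd ih hthree).mono fun B hB =>
        hB.of_empty hG hF.linked hF.linked_done hF.disjoint hF.root_notMem hF.root_notMem_done
          hF.mem_cutEdges hbd hle
    by_cases hH : G.Bridgeless H
    · exact hF.manyBases_of_bridgeless hG hd ih (by omega) hbd hH
    · exact hF.manyBases_of_not_bridgeless hG ih hbd hH

end IsFrontier

end

/-! ### Three-connected cubic graphs -/

section

variable {V E : Type} {G : Multigraph V E} {B C : Set E} {S : Set V} {r u v : V} {e : E}

theorem ThreeConnected.linked [Fintype V] (h : G.ThreeConnected) (u v : V) :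
    G.Linked {w | w ≠ u ∧ w ≠ v} :=
  (linkedBy_of_reaches (h.2.2 u v)).mono (Set.subset_univ _)

theorem ThreeConnected.exists_mem_cutEdges [Fintype V] (h : G.ThreeConnected)
    (hS : (S \ {u, v}).Nonempty) (hS' : (Sᶜ \ {u, v}).Nonempty) :
    ∃ e ∈ G.cutEdges S, ¬ G.Meets e {u, v} := by
  obtain ⟨e, he⟩ := (h.linked u v).nonempty_between (A := S \ {u, v}) (by grind) hS
    (hS'.mono (by grind))
  exact ⟨e, by grind, by grind⟩

theorem exists_forall_mem_cutEdges_meets_of_ncard_lt_three [Finite E] (hS : S.Nonempty)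
    (hS' : Sᶜ.Nonempty) (h : (G.cutEdges S).ncard < 3) :
    ∃ u ∈ S, ∃ v ∈ Sᶜ, ∀ e ∈ G.cutEdges S, G.Meets e {u, v} := by
  rcases (G.cutEdges S).eq_empty_or_nonempty with hempty | ⟨a, ha⟩
  · obtain ⟨u, hu⟩ := hS
    obtain ⟨v, hv⟩ := hS'
    exact ⟨u, hu, v, hv, by simp [hempty]⟩
  obtain ⟨b, hb, hab⟩ : ∃ b ∈ G.cutEdges S, G.cutEdges S ⊆ {a, b} := by
    by_contra! hcon
    obtain ⟨b, hb, hba⟩ := Set.not_subset.1 (hcon a ha)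
    obtain ⟨c, hc, hcab⟩ := Set.not_subset.1 (hcon b hb)
    have := Set.ncard_le_ncard (Set.insert_subset ha (Set.pair_subset hb hc))
    rw [Set.ncard_eq_three.2 ⟨a, b, c, by grind, by grind, by grind, rfl⟩] at this
    omega
  obtain ⟨u, hu, hau⟩ := exists_mem_incidentEdges_of_mem_cutEdges ha
  obtain ⟨v, hv, hbv⟩ := exists_mem_incidentEdges_of_mem_cutEdges ((cutEdges_compl S).symm ▸ hb)
  exact ⟨u, hu, v, hv, by grind⟩

theorem Cubic.ncard_cutEdges_singleton_add [Finite E] (h : G.Cubic) (v : V) :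
    (G.cutEdges {v}).ncard + 2 * {e | G.src e = v ∧ G.tgt e = v}.ncard = 3 := by
  have hdeg : {e | G.src e = v}.ncard + {e | G.tgt e = v}.ncard = 3 := h v
  have hcut : G.cutEdges {v} = G.incidentEdges v \ {e | G.src e = v ∧ G.tgt e = v} := by
    ext e
    grind
  have hinter := Set.ncard_union_add_ncard_inter {e | G.src e = v} {e | G.tgt e = v}
  have hsdiff := Set.ncard_sdiff_add_ncard_of_subset
    (s := {e | G.src e = v ∧ G.tgt e = v}) (t := G.incidentEdges v) (by grind)
  rw [← hcut] at hsdiff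
  change (G.incidentEdges v).ncard + {e | G.src e = v ∧ G.tgt e = v}.ncard = _ at hinter
  omega

theorem ThreeConnected.ncard_cutEdges_singleton [Fintype V] [Finite E] (h : G.ThreeConnected)
    (hc : G.Cubic) (s : V) : (G.cutEdges {s}).ncard = 3 := by
  have hloops := hc.ncard_cutEdges_singleton_add s
  by_contra hne
  have hle : (G.cutEdges {s}).ncard ≤ 1 := by omega
  obtain ⟨u, hus, hu⟩ : ∃ u ≠ s, ∀ e ∈ G.cutEdges {s}, G.Meets e {u} := by
    rcases (G.cutEdges {s}).eq_empty_or_nonempty with hempty | ⟨a, ha⟩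
    · have : 1 < Fintype.card V := by have := h.1; omega
      obtain ⟨u, hu⟩ := Fintype.exists_ne_of_one_lt_card this s
      exact ⟨u, hu, by simp [hempty]⟩
    · obtain ⟨u, hus, hau⟩ :=
        exists_mem_incidentEdges_of_mem_cutEdges ((cutEdges_compl {s}).symm ▸ ha)
      exact ⟨u, hus, fun t ht => (Set.ncard_le_one).1 hle t ht a ha ▸ hau⟩
  obtain ⟨w, -, hw⟩ : ∃ w ∈ Set.univ, w ∉ ({s, u} : Set V) := by
    refine Set.exists_mem_notMem_of_ncard_lt_ncard ?_
    rw [Set.ncard_pair hus.symm, Set.ncard_univ, Nat.card_eq_fintype_card]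
    exact (Nat.lt_succ_self 2).trans h.1
  obtain ⟨e, he, hmeets⟩ := h.exists_mem_cutEdges (S := {s}) (u := u) (v := u)
    ⟨s, by grind⟩ ⟨w, by grind⟩
  have := hu e he
  grind

theorem ThreeConnected.loopless [Fintype V] [Finite E] (h : G.ThreeConnected) (hc : G.Cubic) :
    G.Loopless := by
  intro e he
  have hloops := hc.ncard_cutEdges_singleton_add (G.src e)
  have : 0 < {t | G.src t = G.src e ∧ G.tgt t = G.src e}.ncard :=
    (Set.ncard_pos).2 ⟨e, rfl, he.symm⟩
  rw [h.ncard_cutEdges_singleton hc] at hloops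
  omega

theorem ThreeConnected.isCubicThreeEdgeConnected [Fintype V] [Finite E] (h : G.ThreeConnected)
    (hc : G.Cubic) : G.IsCubicThreeEdgeConnected := by
  have : Nonempty V := h.2.1.1
  refine ⟨hc, h.loopless hc, edgeConnected_of_forall_le_ncard_cutEdges fun S hS hS' => ?_⟩
  rcases hS.exists_eq_singleton_or_nontrivial with ⟨s, rfl⟩ | hnt
  · exact (h.ncard_cutEdges_singleton hc s).ge
  rcases hS'.exists_eq_singleton_or_nontrivial with ⟨s, hs⟩ | hnt'
  · rw [← cutEdges_compl, hs]
    exact (h.ncard_cutEdges_singleton hc s).ge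
  by_contra! hlt
  obtain ⟨u, hu, v, hv, hcover⟩ :=
    exists_forall_mem_cutEdges_meets_of_ncard_lt_three hS hS' hlt
  obtain ⟨x, hx, hxu⟩ := hnt.exists_ne u
  obtain ⟨y, hy, hyv⟩ := hnt'.exists_ne v
  obtain ⟨e, he, hmeets⟩ :=
    h.exists_mem_cutEdges (S := S) (u := u) (v := v) ⟨x, by grind⟩ ⟨y, by grind⟩
  exact hmeets (hcover e he)

theorem Cubic.two_mul_card [Fintype V] [Finite E] (h : G.Cubic) :
    2 * Nat.card E = 3 * Fintype.card V := by
  have := Fintype.ofFinite E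
  have hfiber : ∀ φ : E → V, ∑ v, {e | φ e = v}.ncard = Nat.card E := by
    intro φ
    rw [Nat.card_eq_fintype_card, ← Finset.card_univ,
      Finset.card_eq_sum_card_fiberwise (f := φ) (t := Finset.univ) (by simp)]
    refine Finset.sum_congr rfl fun v _ => ?_
    rw [Set.ncard_eq_toFinset_card', Set.toFinset_ofPred]
  calc 2 * Nat.card E = ∑ v, G.degree v := by
        simp only [degree, Finset.sum_add_distrib, hfiber, two_mul]
    _ = 3 * Fintype.card V := by
        rw [Finset.sum_congr rfl fun v _ => h v, Finset.sum_const, Finset.card_univ, smul_eq_mul,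
          mul_comm]

/-! ### Deleting the root -/

theorem Reaches.deleteVertex {Q : E → Prop} (hQ : ∀ e, Q e → G.src e ≠ r ∧ G.tgt e ≠ r)
    (h : G.Reaches Q u v) (hu : u ≠ r) :
    ∃ hv : v ≠ r, (G.deleteVertex r).Reaches (fun e => Q e.1) ⟨u, hu⟩ ⟨v, hv⟩ := by
  induction h with
  | refl => exact ⟨hu, Relation.ReflTransGen.refl⟩
  | tail _ hbc ih =>
    obtain ⟨hb, ih⟩ := ih
    obtain ⟨e, he, ⟨rfl, rfl⟩ | ⟨rfl, rfl⟩⟩ := hbc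
    · exact ⟨(hQ e he).2, ih.tail ⟨⟨e, hQ e he⟩, he, Or.inl ⟨rfl, rfl⟩⟩⟩
    · exact ⟨(hQ e he).1, ih.tail ⟨⟨e, hQ e he⟩, he, Or.inr ⟨rfl, rfl⟩⟩⟩

theorem ncard_preimage_val_of_subset_inside (h : C ⊆ G.inside {r}ᶜ) :
    (Subtype.val ⁻¹' C : Set {e // G.src e ≠ r ∧ G.tgt e ≠ r}).ncard = C.ncard :=
  Set.ncard_preimage_of_injective_subset_range Subtype.val_injective fun e he => ⟨⟨e, h he⟩, rfl⟩

theorem subset_inside_of_not_touches (hr : ¬ G.touches C r) : C ⊆ G.inside {r}ᶜ :=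
  fun e he => ⟨fun h => hr ⟨e, he, Or.inl h⟩, fun h => hr ⟨e, he, Or.inr h⟩⟩

theorem IsCycle.deleteVertex (hC : G.IsCycle C) (hr : ¬ G.touches C r) :
    (G.deleteVertex r).IsCycle (Subtype.val ⁻¹' C) := by
  have hsub := subset_inside_of_not_touches hr
  have htouch : ∀ v, (G.deleteVertex r).touches (Subtype.val ⁻¹' C) v → G.touches C v.1 := by
    rintro v ⟨e, he, rfl | rfl⟩
    exacts [⟨e.1, he, Or.inl rfl⟩, ⟨e.1, he, Or.inr rfl⟩]
  refine ⟨?_, fun v hv => ?_, fun u v hu hv => ?_⟩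
  · obtain ⟨e, he⟩ := hC.1
    exact ⟨⟨e, hsub he⟩, he⟩
  · rw [← hC.2.1 v.1 (htouch v hv),
      ← ncard_preimage_val_of_subset_inside (C := {e ∈ C | G.src e = v.1}) fun e he => hsub he.1,
      ← ncard_preimage_val_of_subset_inside (C := {e ∈ C | G.tgt e = v.1}) fun e he => hsub he.1]
    congr 2 <;> exact Set.ext fun e => and_congr_right fun _ => Subtype.ext_iff
  · exact ((hC.2.2 u v (htouch u hu) (htouch v hv)).deleteVertex (fun e he => hsub he) u.2).2

theorem Closed.closedAvoiding {R : Set {e : E // G.src e ≠ r ∧ G.tgt e ≠ r}}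
    (hR : (G.deleteVertex r).Closed 2 R) : G.ClosedAvoiding r (Subtype.val '' R) := by
  intro C hC hr hne
  have hsub : C \ Subtype.val '' R ⊆ G.inside {r}ᶜ :=
    Set.sdiff_subset.trans (subset_inside_of_not_touches hr)
  have hpre : Subtype.val ⁻¹' (C \ Subtype.val '' R) = (Subtype.val ⁻¹' C) \ R := by
    rw [Set.preimage_sdiff, Set.preimage_image_eq _ Subtype.val_injective]
  rw [← ncard_preimage_val_of_subset_inside hsub, hpre]
  refine hR _ (hC.deleteVertex hr) ?_
  rw [← hpre]
  obtain ⟨e, he⟩ := hne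
  exact ⟨⟨e, hsub he⟩, he⟩

theorem IsPartialBase.isBase_deleteVertex (h : G.IsPartialBase r {r}ᶜ ∅ e B)
    (he : e ∈ G.cutEdges {r}ᶜ) : (G.deleteVertex r).IsBase 2 (Subtype.val ⁻¹' B) := by
  refine Set.eq_univ_of_forall fun x R ⟨hBR, hR⟩ => ?_
  have hx : x.1 ∈ G.inside ({r}ᶜ ∪ ∅) \ {e} := by
    have := x.2
    grind
  obtain ⟨y, hy, hyx⟩ := h.closure _ hR.closedAvoiding
    (fun t ht => ⟨⟨t, h.subset ht⟩, hBR ht, rfl⟩) (by grind) hx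
  rwa [← Subtype.ext hyx]

theorem IsPartialBase.connectedVia_deleteVertex (h : G.IsPartialBase r {r}ᶜ ∅ e B)
    (hr : ({r}ᶜ : Set V).Nonempty) :
    (G.deleteVertex r).ConnectedVia (fun e => e ∉ Subtype.val ⁻¹' B) := by
  obtain ⟨v, hv⟩ := hr
  refine ⟨⟨⟨v, hv⟩⟩, fun u v => ?_⟩
  obtain ⟨_, hreach⟩ :=
    (h.linked.reaches u.2 v.2).deleteVertex (r := r) (fun t ht => ht.1) u.2
  exact Relation.ReflTransGen.mono (fun a b ⟨t, ht, hab⟩ => ⟨t, ht.2, hab⟩) _ _ hreach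

theorem IsPartialBase.isForest_deleteVertex [Finite V] [Finite E]
    (h : G.IsPartialBase r {r}ᶜ ∅ e B) (hr : ({r}ᶜ : Set V).Nonempty) :
    (G.deleteVertex r).IsForest (Subtype.val ⁻¹' B)ᶜ := by
  refine LinkedBy.isForest
    (linkedBy_of_reaches (by simpa using (h.connectedVia_deleteVertex hr).2)) ?_
  have hcompl : (Subtype.val ⁻¹' B : Set {e : E // G.src e ≠ r ∧ G.tgt e ≠ r})ᶜ =
      Subtype.val ⁻¹' (G.inside {r}ᶜ \ B) :=
    Set.ext fun t => ⟨fun ht => ⟨t.2, ht⟩, fun ht => ht.2⟩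
  rw [hcompl, ncard_preimage_val_of_subset_inside Set.sdiff_subset, h.ncard]
  exact le_rfl

theorem ncard_isPartialBase_le_card_deleteVertex [Finite V] [Finite E]
    (he : e ∈ G.cutEdges {r}ᶜ) :
    {B | G.IsPartialBase r {r}ᶜ ∅ e B}.ncard ≤
      Nat.card {B : Set {e : E // G.src e ≠ r ∧ G.tgt e ≠ r} //
        (G.deleteVertex r).IsBase 2 B ∧
        (G.deleteVertex r).ConnectedVia (fun e => e ∉ B) ∧
        (G.deleteVertex r).IsForest Bᶜ} := by
  have hr : ({r}ᶜ : Set V).Nonempty := by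
    obtain ⟨v, hv, -⟩ := exists_mem_incidentEdges_of_mem_cutEdges he
    exact ⟨v, hv⟩
  have himage : ∀ B, G.IsPartialBase r {r}ᶜ ∅ e B → Subtype.val ''
      (Subtype.val ⁻¹' B : Set {e : E // G.src e ≠ r ∧ G.tgt e ≠ r}) = B := fun B hB =>
    Set.image_preimage_eq_of_subset fun t ht => ⟨⟨t, hB.subset ht⟩, rfl⟩
  rw [← Set.coe_ofPred, Nat.card_coe_set_eq]
  refine Set.ncard_le_ncard_of_injOn (fun B => Subtype.val ⁻¹' B) (fun B hB =>
    ⟨hB.isBase_deleteVertex he, hB.connectedVia_deleteVertex hr, hB.isForest_deleteVertex hr⟩)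
    (fun B hB B' hB' heq => ?_) (Set.toFinite _)
  rw [← himage B hB, ← himage B' hB']
  exact congrArg _ heq

/-! ### The number of partial bases of the whole graph -/

theorem ThreeConnected.exists_isFrontier [Fintype V] [Finite E] (h : G.ThreeConnected)
    (hc : G.Cubic) (r : V) : ∃ e ∈ G.cutEdges {r}ᶜ, G.IsFrontier r {r}ᶜ ∅ e := by
  have hcut : (G.cutEdges {r}ᶜ).ncard = 3 := by
    rw [cutEdges_compl, h.ncard_cutEdges_singleton hc]
  obtain ⟨e, he⟩ := Set.nonempty_of_ncard_ne_zero (by omega : (G.cutEdges {r}ᶜ).ncard ≠ 0)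
  obtain ⟨v, hv, -⟩ := exists_mem_incidentEdges_of_mem_cutEdges he
  have hlink : G.Linked {r}ᶜ := by
    convert h.linked r r using 1
    grind
  refine ⟨e, he, ⟨v, hv⟩, hlink, ?_, linkedBy_empty _, by simp, by simp, by simp, he,
    Or.inl ⟨rfl, hcut⟩⟩
  rw [compl_compl]
  exact linkedBy_singleton _ r

theorem Cubic.ncard_inside_compl_singleton [Finite E] (hG : G.Cubic) (hl : G.Loopless) (r : V) :
    (G.inside {r}ᶜ).ncard + 3 = Nat.card E := by
  have hcompl : (G.inside {r}ᶜ)ᶜ = G.incidentEdges r := by grind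
  rw [← hG.ncard_incidentEdges hl r, ← hcompl, Set.ncard_add_ncard_compl]

theorem ThreeConnected.card_le_mul_of_ncard_inside_le [Fintype V] [Finite E] {k q : ℕ}
    (hG : G.ThreeConnected) (hc : G.Cubic)
    (hcard : (G.inside {r}ᶜ).ncard + 1 ≤ ({r}ᶜ : Set V).ncard + k * (q - 1)) :
    0 < q ∧ Fintype.card V ≤ k * (2 * q) := by
  have hV := hG.1
  have hedges := hc.ncard_inside_compl_singleton (hG.loopless hc) r
  have hverts : ({r}ᶜ : Set V).ncard + 1 = Fintype.card V := by
    have := Set.ncard_add_ncard_compl {r}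
    rw [Set.ncard_singleton, Nat.card_eq_fintype_card] at this
    omega
  have hdeg := hc.two_mul_card
  have hn : Fintype.card V ≤ 2 * (k * (q - 1)) + 2 := by omega
  rcases q with _ | p
  · simp at hn
    omega
  rcases k.eq_zero_or_pos with rfl | hk
  · omega
  · refine ⟨p.succ_pos, ?_⟩
    rw [Nat.add_sub_cancel] at hn
    nlinarith

end

end Multigraph

/-- Let `G` be a 3-connected cubic graph on `n` vertices with a root `r`. If every
peripheral cycle of `G` has length at most `q`, then `G − r` has at least `2^(n/(2q))`
decompositions of its edge set into (the edge set of) a spanning tree and a 2-base;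
such a decomposition is recorded by the 2-base `B`, whose complement is required to be
the edge set of a spanning tree (connected, spanning and acyclic). -/
theorem many_tree_two_base_decompositions {V E : Type} [Fintype V] [Fintype E]
    (G : Multigraph V E) (hG : G.ThreeConnected) (hcubic : G.Cubic) (r : V) (q : ℕ)
    (hper : ∀ C : Set E, G.IsCycle C → G.Peripheral C → C.ncard ≤ q) :
    (2 : ℝ) ^ ((Fintype.card V : ℝ) / (2 * (q : ℝ))) ≤
      Nat.card {B : Set {e : E // G.src e ≠ r ∧ G.tgt e ≠ r} //
        (G.deleteVertex r).IsBase 2 B ∧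
        (G.deleteVertex r).ConnectedVia (fun e => e ∉ B) ∧
        (G.deleteVertex r).IsForest Bᶜ} := by
  obtain ⟨e, he, hF⟩ := hG.exists_isFrontier hcubic r
  obtain ⟨k, hk, hcard⟩ := hF.manyBases (d := q - 1) (hG.isCubicThreeEdgeConnected hcubic)
    fun C hC hCper => (hper C hC hCper).trans le_tsub_add
  obtain ⟨hq, hVk⟩ := hG.card_le_mul_of_ncard_inside_le hcubic hcard
  have hexp : (Fintype.card V : ℝ) / (2 * (q : ℝ)) ≤ k := by
    rw [div_le_iff₀ (by positivity)]
    exact_mod_cast hVk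
  calc (2 : ℝ) ^ ((Fintype.card V : ℝ) / (2 * (q : ℝ)))
      ≤ 2 ^ (k : ℝ) := Real.rpow_le_rpow_of_exponent_le one_le_two hexp
    _ = (2 ^ k : ℕ) := by rw [Real.rpow_natCast]; norm_cast
    _ ≤ _ := by exact_mod_cast hk.trans (Multigraph.ncard_isPartialBase_le_card_deleteVertex he)
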